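/- Let β > 0, ρ ∈ (0,λ_1), and for every r ∈ ℝ let the two-overlap distributions under the full and restricted Gibbs measures be E𝒢_{β,N}^{×2}[1_{{q^N(v,v') ≤ r}}] and E𝒢_{β,N,ρ}^{×2}[1_{{q^N(v,v') ≤ r}}]. Then lim_{N→∞} |E𝒢_{β,N}^{×2}[1_{{q^N(v,v') ≤ r}}] − E𝒢_{β,N,ρ}^{×2}[1_{{q^N(v,v') ≤ r}}]| = 0, and this holds even when r depends on ρ. -/

import Mathlib

open Filter
open scoped Classical

noncomputable section GFFCommon

/-- Vertices of `ℤ²`. -/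
abbrev Vtx : Type := ℤ × ℤ

/-- Sample space: a real-valued field indexed by the vertices of `ℤ²`. -/
abbrev FieldSp : Type := Vtx → ℝ

/-- The box `V_N = {0,1,…,N}²`. -/
def VN (N : ℕ) : Finset Vtx := Finset.Icc (0, 0) ((N : ℤ), (N : ℤ))

/-- The boundary `∂B` of a finite box `B ⊆ ℤ²`:
vertices of `B` having a (Euclidean distance 1) neighbour outside `B`. -/
def bdry (B : Finset Vtx) : Finset Vtx :=
  B.filter fun v =>
    ¬((v.1 + 1, v.2) ∈ B ∧ (v.1 - 1, v.2) ∈ B ∧ (v.1, v.2 + 1) ∈ B ∧ (v.1, v.2 - 1) ∈ B)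

/-- The interior `B° = B ∖ ∂B`. -/
def intr (B : Finset Vtx) : Finset Vtx := B \ bdry B

/-- The neighbourhood `[v]_λ` of `v` in `V_N`. -/
def nbhd (N : ℕ) (lam : ℝ) (v : Vtx) : Finset Vtx :=
  if lam = 0 then VN N
  else if lam = 1 then {v}
  else (VN N).filter fun w =>
    |(w.1 : ℝ) - (v.1 : ℝ)| ≤ (N : ℝ) ^ ((1 : ℝ) - lam) / 2 ∧
    |(w.2 : ℝ) - (v.2 : ℝ)| ≤ (N : ℝ) ^ ((1 : ℝ) - lam) / 2

/-- The σ-algebra `F_{∂[v]_λ ∪ [v]_λ^c}`, generated by the field variables on the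
boundary of `[v]_λ` and those outside of it. -/
def scaleAlg (N : ℕ) (lam : ℝ) (v : Vtx) : MeasurableSpace FieldSp :=
  ⨆ w ∈ {w : Vtx | w ∈ VN N ∧ w ∉ intr (nbhd N lam v)},
    MeasurableSpace.comap (fun ω : FieldSp => ω w) inferInstance

/-- `G` is the Green function of simple random walk killed on `∂B`, normalized by `π/2`:
it vanishes unless both arguments are in `B°`, and in `B°` it satisfies the
first-step (discrete Poisson equation) characterization
`G(x,y) = (1/4)·Σ_{x'∼x} G(x',y) + (π/2)·1_{x=y}`. -/
def IsGreenFn (B : Finset Vtx) (G : Vtx → Vtx → ℝ) : Prop :=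
  (∀ x y : Vtx, x ∉ intr B ∨ y ∉ intr B → G x y = 0) ∧
  ∀ y ∈ intr B, ∀ x ∈ intr B,
    G x y = (G (x.1 + 1, x.2) y + G (x.1 - 1, x.2) y
        + G (x.1, x.2 + 1) y + G (x.1, x.2 - 1) y) / 4
      + (Real.pi / 2) * (if x = y then 1 else 0)

/-- `P` is the law (on the canonical space `FieldSp`) of the Gaussian free field on `V_N`:
a centered Gaussian field with covariance the Green function `G_{V_N}`. -/
def IsGFF (N : ℕ) (P : MeasureTheory.Measure FieldSp) : Prop :=
  MeasureTheory.IsProbabilityMeasure P ∧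
  ∃ G : Vtx → Vtx → ℝ, IsGreenFn (VN N) G ∧
    ∀ c : Vtx → ℝ,
      P.map (fun ω => ∑ v ∈ VN N, c v * ω v) =
        ProbabilityTheory.gaussianReal 0 (Real.toNNReal (∑ v ∈ VN N, ∑ w ∈ VN N, c v * c w * G v w))

open MeasureTheory in
/-- `φ_v(λ) = E[φ_v | F_{∂[v]_λ ∪ [v]_λ^c}]`. -/
def phiScale (N : ℕ) (P : MeasureTheory.Measure FieldSp) (v : Vtx) (lam : ℝ) : FieldSp → ℝ :=
  P[fun ω : FieldSp => ω v | scaleAlg N lam v]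

/-- Admissible parameters `(σ,λ)`: `σ_1,…,σ_M > 0` and `0 = λ_0 < λ_1 < … < λ_M = 1`. -/
def ScaleParams (M : ℕ) (sigv lamv : ℕ → ℝ) : Prop :=
  1 ≤ M ∧ (∀ i ∈ Finset.Icc 1 M, 0 < sigv i) ∧
  lamv 0 = 0 ∧ lamv M = 1 ∧ ∀ i, i < M → lamv i < lamv (i + 1)

/-- The `(σ,λ)`-GFF: `ψ_v = Σ_{i=1}^M σ_i (φ_v(λ_i) − φ_v(λ_{i−1}))`. -/
def psiFld (N M : ℕ) (sigv lamv : ℕ → ℝ) (P : MeasureTheory.Measure FieldSp) (v : Vtx) : FieldSp → ℝ :=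
  fun ω => ∑ i ∈ Finset.Icc 1 M, sigv i * (phiScale N P v (lamv i) ω - phiScale N P v (lamv (i - 1)) ω)

open MeasureTheory in
/-- `ψ_v(λ) = E[ψ_v | F_{∂[v]_λ ∪ [v]_λ^c}]`. -/
def psiScale (N M : ℕ) (sigv lamv : ℕ → ℝ) (P : MeasureTheory.Measure FieldSp) (v : Vtx) (lam : ℝ) :
    FieldSp → ℝ :=
  P[psiFld N M sigv lamv P v | scaleAlg N lam v]

/-- The increment `ψ_v(λ,λ') = ψ_v(λ') − ψ_v(λ)`. -/
def psiInc (N M : ℕ) (sigv lamv : ℕ → ℝ) (P : MeasureTheory.Measure FieldSp) (v : Vtx) (lam lam' : ℝ) :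
    FieldSp → ℝ :=
  fun ω => psiScale N M sigv lamv P v lam' ω - psiScale N M sigv lamv P v lam ω

/-- The step function `σ(s) = σ_1 1_{{0}}(s) + Σ_{i=1}^M σ_i 1_{(λ_{i−1},λ_i]}(s)`. -/
def stepFn (M : ℕ) (sigv lamv : ℕ → ℝ) (s : ℝ) : ℝ :=
  (if s = 0 then sigv 1 else 0) +
  ∑ i ∈ Finset.Icc 1 M, if lamv (i - 1) < s ∧ s ≤ lamv i then sigv i else 0

/-- `𝒥_f(s) = ∫_0^s f(r) dr`. -/
def Jint (f : ℝ → ℝ) (s : ℝ) : ℝ := ∫ r in (0:ℝ)..s, f r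

/-- `𝒥_f(s₁,s₂) = ∫_{s₁}^{s₂} f(r) dr`. -/
def Jint2 (f : ℝ → ℝ) (s₁ s₂ : ℝ) : ℝ := ∫ r in s₁..s₂, f r

/-- The speed function `𝒥_{σ²}`. -/
def Jsig2 (M : ℕ) (sigv lamv : ℕ → ℝ) (s : ℝ) : ℝ := Jint (fun r => (stepFn M sigv lamv r) ^ 2) s

/-- The normalized speed function `𝒥̄_{σ²} = 𝒥_{σ²}/𝒥_{σ²}(1)`. -/
def JsigBar (M : ℕ) (sigv lamv : ℕ → ℝ) (s : ℝ) : ℝ := Jsig2 M sigv lamv s / Jsig2 M sigv lamv 1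

/-- The concave hull on `[0,1]` of a function `f`, i.e. the pointwise infimum over all
concave functions dominating `f` on `[0,1]`. -/
def concaveHull (f : ℝ → ℝ) (s : ℝ) : ℝ :=
  sInf {y | ∃ g : ℝ → ℝ, ConcaveOn ℝ (Set.Icc (0:ℝ) 1) g ∧
    (∀ t ∈ Set.Icc (0:ℝ) 1, f t ≤ g t) ∧ y = g s}

/-- The effective parameters: jump scales `0 = λ⁰ < … < λ^m = 1`, values
`σ̄_1 > … > σ̄_m > 0`, and the left-continuous non-increasing step function `σ̄`
such that `∫_0^s σ̄²` is the concavification of `𝒥_{σ²}`. -/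
def EffParams (M : ℕ) (sigv lamv : ℕ → ℝ) (m : ℕ) (sigb lamb : ℕ → ℝ) (sigbar : ℝ → ℝ) : Prop :=
  1 ≤ m ∧ m ≤ M ∧ lamb 0 = 0 ∧ lamb m = 1 ∧ (∀ j, j < m → lamb j < lamb (j + 1)) ∧
  (∀ l, 1 ≤ l → l < m → sigb (l + 1) < sigb l) ∧ (∀ l ∈ Finset.Icc 1 m, 0 < sigb l) ∧
  sigbar 0 = sigb 1 ∧
  (∀ l ∈ Finset.Icc 1 m, ∀ s : ℝ, lamb (l - 1) < s → s ≤ lamb l → sigbar s = sigb l) ∧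
  (∀ s : ℝ, 0 < s → s ≤ 1 →
    concaveHull (Jsig2 M sigv lamv) s = ∫ r in (0:ℝ)..s, (sigbar r) ^ 2)

/-- `γ* = 𝒥_{σ²/σ̄}(1)`. -/
def gammaStar (M : ℕ) (sigv lamv : ℕ → ℝ) (sigbar : ℝ → ℝ) : ℝ :=
  ∫ s in (0:ℝ)..1, (stepFn M sigv lamv s) ^ 2 / sigbar s

/-- The critical levels `γ^l = ∫_0^1 σ²(s)/σ̄(s ∧ λ^l) ds`, `γ⁰ = 0`. -/
def gammaL (M : ℕ) (sigv lamv : ℕ → ℝ) (lamb : ℕ → ℝ) (sigbar : ℝ → ℝ) (l : ℕ) : ℝ :=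
  if l = 0 then 0 else ∫ s in (0:ℝ)..1, (stepFn M sigv lamv s) ^ 2 / sigbar (min s (lamb l))

/-- `EntE` is the entropy function `𝓔` of the model. -/
def IsEntropy (M : ℕ) (sigv lamv : ℕ → ℝ) (m : ℕ) (lamb : ℕ → ℝ) (sigbar : ℝ → ℝ)
    (EntE : ℝ → ℝ) : Prop :=
  EntE 0 = 1 ∧
  ∀ l ∈ Finset.Icc 1 m, ∀ γ : ℝ,
    gammaL M sigv lamv lamb sigbar (l - 1) < γ → γ ≤ gammaL M sigv lamv lamb sigbar l →
      EntE γ = (1 - lamb (l - 1)) -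
        (γ - ∫ s in (0:ℝ)..(lamb (l - 1)), (stepFn M sigv lamv s) ^ 2 / sigbar s) ^ 2 /
          Jint2 (fun r => (stepFn M sigv lamv r) ^ 2) (lamb (l - 1)) 1

/-- The limiting free energy of the `REM(σ)` model. -/
def fREM (σ β : ℝ) : ℝ :=
  if (2 / σ) < β then 2 * (β / (2 / σ)) else 1 + (β / (2 / σ)) ^ 2

/-- The index `l_β`. -/
def lbeta (m : ℕ) (sigb : ℕ → ℝ) (β : ℝ) : ℕ :=
  if β ≤ 2 / sigb m then sInf {l : ℕ | 1 ≤ l ∧ β ≤ 2 / sigb l} else m + 1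

/-- The limiting free energy `f^ψ(β)`, written with the `l_β` split. -/
def fpsiLim (m : ℕ) (sigb lamb : ℕ → ℝ) (β : ℝ) : ℝ :=
  (∑ j ∈ Finset.Icc 1 (lbeta m sigb β - 1), (2 * β / (2 / sigb j)) * (lamb j - lamb (j - 1))) +
  ∑ j ∈ Finset.Icc (lbeta m sigb β) m, (1 + β ^ 2 / (2 / sigb j) ^ 2) * (lamb j - lamb (j - 1))

/-- The set `ℬ` of non-critical inverse temperatures. -/
def critSet (m : ℕ) (sigb : ℕ → ℝ) : Set ℝ :=
  {β | 0 < β ∧ ∀ j ∈ Finset.Icc 1 m, β ≠ 2 / sigb j}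

/-- The partition function `Z_N^ψ(β)`. -/
def ZN (N M : ℕ) (sigv lamv : ℕ → ℝ) (P : MeasureTheory.Measure FieldSp) (β : ℝ) (ω : FieldSp) : ℝ :=
  ∑ v ∈ VN N, Real.exp (β * psiFld N M sigv lamv P v ω)

/-- The free energy `f_N^ψ(β)` on `V_N`. -/
def freeEnergy (N M : ℕ) (sigv lamv : ℕ → ℝ) (P : MeasureTheory.Measure FieldSp) (β : ℝ) (ω : FieldSp) : ℝ :=
  (Real.log ((N : ℝ) ^ 2))⁻¹ * Real.log (ZN N M sigv lamv P β ω)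

/-- The set `A_{N,ρ}` of points at distance at least `N^{1−ρ}` from `ℤ² ∖ V_N`. -/
def AN (N : ℕ) (ρ : ℝ) : Finset Vtx :=
  (VN N).filter fun v => ∀ z : Vtx, z ∉ VN N →
    (N : ℝ) ^ ((1 : ℝ) - ρ) ≤ Real.sqrt (((v.1 : ℝ) - (z.1 : ℝ)) ^ 2 + ((v.2 : ℝ) - (z.2 : ℝ)) ^ 2)

/-- The restricted partition function `Z_{N,ρ}^ψ(β)`. -/
def ZNres (N M : ℕ) (sigv lamv : ℕ → ℝ) (P : MeasureTheory.Measure FieldSp) (β ρ : ℝ) (ω : FieldSp) : ℝ :=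
  ∑ v ∈ AN N ρ, Real.exp (β * psiFld N M sigv lamv P v ω)

/-- The free energy `f_{N,ρ}^ψ(β)` on `A_{N,ρ}`. -/
def freeEnergyRes (N M : ℕ) (sigv lamv : ℕ → ℝ) (P : MeasureTheory.Measure FieldSp) (β ρ : ℝ)
    (ω : FieldSp) : ℝ :=
  (Real.log ((N : ℝ) ^ 2))⁻¹ * Real.log (ZNres N M sigv lamv P β ρ ω)

/-- The Gibbs weight `𝒢_{β,N}({v})`. -/
def gibbsW (N M : ℕ) (sigv lamv : ℕ → ℝ) (P : MeasureTheory.Measure FieldSp) (β : ℝ) (v : Vtx)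
    (ω : FieldSp) : ℝ :=
  Real.exp (β * psiFld N M sigv lamv P v ω) / ZN N M sigv lamv P β ω

/-- The restricted Gibbs weight `𝒢_{β,N,ρ}({v})`. -/
def gibbsWres (N M : ℕ) (sigv lamv : ℕ → ℝ) (P : MeasureTheory.Measure FieldSp) (β ρ : ℝ) (v : Vtx)
    (ω : FieldSp) : ℝ :=
  Real.exp (β * psiFld N M sigv lamv P v ω) / ZNres N M sigv lamv P β ρ ω

/-- `E𝒢_{β,N}^{×s}[F]`: the mean over the disorder of the `s`-fold Gibbs average of `F`. -/
def gibbsExp (N M : ℕ) (sigv lamv : ℕ → ℝ) (P : MeasureTheory.Measure FieldSp) (β : ℝ) (s : ℕ)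
    (F : (Fin s → Vtx) → ℝ) : ℝ :=
  ∫ ω, (∑ vv ∈ Fintype.piFinset (fun _ : Fin s => VN N),
    (∏ i, gibbsW N M sigv lamv P β (vv i) ω) * F vv) ∂P

/-- `E𝒢_{β,N,ρ}^{×s}[F]`, with an `ω`-dependent integrand allowed. -/
def gibbsExpRes (N M : ℕ) (sigv lamv : ℕ → ℝ) (P : MeasureTheory.Measure FieldSp) (β ρ : ℝ) (s : ℕ)
    (F : (Fin s → Vtx) → FieldSp → ℝ) : ℝ :=
  ∫ ω, (∑ vv ∈ Fintype.piFinset (fun _ : Fin s => AN N ρ),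
    (∏ i, gibbsWres N M sigv lamv P β ρ (vv i) ω) * F vv ω) ∂P

/-- `E𝒢_{β,N}^{×s}[F]`, with an `ω`-dependent integrand allowed. -/
def gibbsExpW (N M : ℕ) (sigv lamv : ℕ → ℝ) (P : MeasureTheory.Measure FieldSp) (β : ℝ) (s : ℕ)
    (F : (Fin s → Vtx) → FieldSp → ℝ) : ℝ :=
  ∫ ω, (∑ vv ∈ Fintype.piFinset (fun _ : Fin s => VN N),
    (∏ i, gibbsW N M sigv lamv P β (vv i) ω) * F vv ω) ∂P

/-- The covariance `E[ψ_v ψ_{v'}]`. -/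
def psiCov (N M : ℕ) (sigv lamv : ℕ → ℝ) (P : MeasureTheory.Measure FieldSp) (v v' : Vtx) : ℝ :=
  ∫ ω, psiFld N M sigv lamv P v ω * psiFld N M sigv lamv P v' ω ∂P

/-- `C₀` is a constant witnessing the uniform variance upper bound
`max_{v∈V_N} E[ψ_v²] ≤ 𝒥_{σ²}(1) log N + C₀` for `N` large. -/
def IsVarBound (M : ℕ) (sigv lamv : ℕ → ℝ) (P : ℕ → MeasureTheory.Measure FieldSp) (C₀ : ℝ) : Prop :=
  0 < C₀ ∧ ∃ N₀ : ℕ, ∀ N ≥ N₀, ∀ v ∈ VN N,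
    psiCov N M sigv lamv (P N) v v ≤ Jsig2 M sigv lamv 1 * Real.log N + C₀

/-- The overlap `q^N(v,v')`. -/
def overlapQ (N M : ℕ) (sigv lamv : ℕ → ℝ) (P : MeasureTheory.Measure FieldSp) (C₀ : ℝ) (v v' : Vtx) : ℝ :=
  psiCov N M sigv lamv P v v' / (Jsig2 M sigv lamv 1 * Real.log N + C₀)

/-- Convergence in probability to a constant, for a sequence of random variables on a
sequence of probability spaces. -/
def TendstoInProb (P : ℕ → MeasureTheory.Measure FieldSp) (X : ℕ → FieldSp → ℝ) (c : ℝ) : Prop :=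
  ∀ ε : ℝ, 0 < ε → Tendsto (fun N => P N {ω | ε < |X N ω - c|}) atTop (nhds 0)

/-- Convergence in `L^p` to a constant. -/
def TendstoLp (P : ℕ → MeasureTheory.Measure FieldSp) (X : ℕ → FieldSp → ℝ) (p c : ℝ) : Prop :=
  Tendsto (fun N => ∫ ω, |X N ω - c| ^ p ∂(P N)) atTop (nhds 0)

/-- The branching scale `b_N(v,v')`. -/
def bScale (N : ℕ) (v v' : Vtx) : ℝ :=
  sSup {lam : ℝ | lam ∈ Set.Icc (0:ℝ) 1 ∧ ((nbhd N lam v) ∩ (nbhd N lam v')).Nonempty}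

end GFFCommon

/-!
The points of `V_N` outside `A_{N,ρ}` are covered by four strips of width `N^{1-δ}`, one at each
corner, where `δ = min ρ λ_1`. Each strip `S` has of order `N` diagonal translates `S + k` inside
`A_{N,ρ}` which cover no point more than of order `N^{1-δ}` times. With
`F(S) = log ∑_{v ∈ S} exp (β ψ_v)`, concavity of the logarithm gives that `F(A_{N,ρ})` exceeds the
average of the `F(S + k)` by `δ log N - O(1)`. By Gaussian concentration all these quantities are within `O(√(log N))` of their
means, so it suffices that `E F(S) ≤ E F(S + k) + c log N` with `c < δ`.

After a summation by parts, `ψ_v` is a linear combination of averages of the free field against the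
exit distributions from boxes around `v`, all of radius at most `N^{1-δ}`. Moving `v` away from the
boundary by more than this adds a positive semidefinite matrix to the covariances of the `ψ_v`, up
to a perturbation of bounded variance, because the Green function with pole `v` is bounded at
distances from `v` comparable to the distance to the boundary. A positive semidefinite addition does
not decrease `E F`, by Jensen's inequality, and for every `t > 0` the perturbation changes `E F` by
at most `(2 log (N + 1) + O(t²)) / t`, which is a small multiple of `δ log N` for a large fixed `t`.

Hence the strips carry an asymptotically negligible part of the Gibbs mass in expectation, and every
bounded function of finitely many samples has the same limiting averages under both measures.
-/

noncomputable section PotentialTheory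

/-- The four unit vectors of `ℤ²`, i.e. the steps of simple random walk. -/
def unitVecs : Finset Vtx := {(1, 0), (-1, 0), (0, 1), (0, -1)}

lemma sum_unitVecs (F : Vtx → ℝ) :
    ∑ e ∈ unitVecs, F e = F (1, 0) + F (-1, 0) + F (0, 1) + F (0, -1) := by
  simp [unitVecs, add_assoc]

/-- The averaging operator `f ↦ (x ↦ (1/4) ∑_{x' ∼ x} f x')` of simple random walk on `ℤ²`. -/
def neighborAvg : (Vtx → ℝ) →ₗ[ℝ] (Vtx → ℝ) where
  toFun f x := (∑ e ∈ unitVecs, f (x + e)) / 4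
  map_add' f g := by
    ext x
    simp [Finset.sum_add_distrib, add_div]
  map_smul' c f := by
    ext x
    simp [← Finset.mul_sum, mul_div_assoc]

lemma neighborAvg_apply (f : Vtx → ℝ) (x : Vtx) :
    neighborAvg f x = (∑ e ∈ unitVecs, f (x + e)) / 4 := rfl

lemma neighborAvg_eq (f : Vtx → ℝ) (x : Vtx) :
    neighborAvg f x =
      (f (x.1 + 1, x.2) + f (x.1 - 1, x.2) + f (x.1, x.2 + 1) + f (x.1, x.2 - 1)) / 4 := by
  obtain ⟨a, b⟩ := x
  simp [neighborAvg_apply, sum_unitVecs, sub_eq_add_neg]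

lemma neighborAvg_const (c : ℝ) (x : Vtx) : neighborAvg (fun _ => c) x = c := by
  rw [neighborAvg_eq]
  ring

lemma neighborAvg_comp_add_right (f : Vtx → ℝ) (h x : Vtx) :
    neighborAvg (fun z => f (z + h)) x = neighborAvg f (x + h) := by
  simp only [neighborAvg_apply, add_right_comm]

variable {D E : Finset Vtx}

lemma nonpos_of_le_neighborAvg_of_boundary {f : Vtx → ℝ}
    (hsub : ∀ x ∈ D, f x ≤ neighborAvg f x)
    (hbdry : ∀ x ∈ D, ∀ e ∈ unitVecs, x + e ∉ D → f (x + e) ≤ 0) : ∀ x ∈ D, f x ≤ 0 := by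
  by_contra! ⟨z, hz, hfz⟩
  obtain ⟨x₀, hx₀, hmax⟩ := D.exists_max_image f ⟨z, hz⟩
  have hpos : 0 < f x₀ := hfz.trans_le (hmax z hz)
  -- A rightmost maximizer cannot have a maximizer to its right.
  obtain ⟨x₁, hx₁, hright⟩ := (D.filter fun x => f x = f x₀).exists_max_image Prod.fst
    ⟨x₀, by simp [hx₀]⟩
  simp only [Finset.mem_filter] at hx₁ hright
  have hle : ∀ e ∈ unitVecs, f (x₁ + e) ≤ f x₀ := fun e he => by
    by_cases h : x₁ + e ∈ D
    · exact hmax _ h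
    · exact (hbdry x₁ hx₁.1 e he h).trans hpos.le
  have hmem : ((1, 0) : Vtx) ∈ unitVecs := by simp [unitVecs]
  have heq : f (x₁ + (1, 0)) = f x₀ := by
    have havg := hsub x₁ hx₁.1
    rw [neighborAvg_apply, sum_unitVecs] at havg
    linarith [hle _ hmem, hle (-1, 0) (by simp [unitVecs]), hle (0, 1) (by simp [unitVecs]),
      hle (0, -1) (by simp [unitVecs]), hx₁.2]
  have hmemD : x₁ + (1, 0) ∈ D := by
    by_contra h
    linarith [hbdry x₁ hx₁.1 _ hmem h]
  simpa using hright _ ⟨hmemD, heq⟩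

lemma nonpos_of_le_neighborAvg {f : Vtx → ℝ} (hsub : ∀ x ∈ D, f x ≤ neighborAvg f x)
    (hoff : ∀ x ∉ D, f x ≤ 0) (x : Vtx) : f x ≤ 0 := by
  by_cases hx : x ∈ D
  · exact nonpos_of_le_neighborAvg_of_boundary hsub (fun _ _ _ _ => hoff _) x hx
  · exact hoff x hx

lemma eq_zero_of_eq_neighborAvg {f : Vtx → ℝ} (hharm : ∀ x ∈ D, f x = neighborAvg f x)
    (hoff : ∀ x ∉ D, f x = 0) : f = 0 := by
  ext x
  have hneg := nonpos_of_le_neighborAvg (D := D) (f := -f)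
    (fun x hx => by simp [map_neg, ← hharm x hx]) (fun x hx => by simp [hoff x hx]) x
  exact le_antisymm (nonpos_of_le_neighborAvg (fun x hx => (hharm x hx).le)
    (fun x hx => (hoff x hx).le) x) (by simpa using hneg)

/-- `G` is the Green function, normalized by `π/2`, of simple random walk killed on leaving `D`. -/
def IsGreenOn (D : Finset Vtx) (G : Vtx → Vtx → ℝ) : Prop :=
  (∀ x y, x ∉ D ∨ y ∉ D → G x y = 0) ∧
  ∀ y ∈ D, ∀ x ∈ D, G x y = neighborAvg (G · y) x + Real.pi / 2 * if x = y then 1 else 0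

lemma IsGreenFn.isGreenOn {B : Finset Vtx} {G : Vtx → Vtx → ℝ} (hG : IsGreenFn B G) :
    IsGreenOn (intr B) G :=
  ⟨hG.1, fun y hy x hx => by rw [neighborAvg_eq]; exact hG.2 y hy x hx⟩

/-- The operator `u ↦ (u - neighborAvg u)|_D` acting on functions on `D` extended by zero. -/
def dirichletLaplacian (D : Finset Vtx) : (D → ℝ) →ₗ[ℝ] (D → ℝ) :=
  LinearMap.funLeft ℝ ℝ (Subtype.val : D → Vtx) ∘ₗ (LinearMap.id - neighborAvg) ∘ₗ
    Function.ExtendByZero.linearMap ℝ (Subtype.val : D → Vtx)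

lemma dirichletLaplacian_surjective (D : Finset Vtx) :
    Function.Surjective (dirichletLaplacian D) := by
  rw [← LinearMap.injective_iff_surjective, injective_iff_map_eq_zero]
  intro u hu
  set U : Vtx → ℝ := Function.extend Subtype.val u 0
  have hU : U = 0 := eq_zero_of_eq_neighborAvg (D := D)
    (fun x hx => sub_eq_zero.1 (congrFun hu ⟨x, hx⟩))
    (fun x hx => Function.extend_apply' _ _ _ (by simpa using hx))
  ext x
  simpa [U, Subtype.val_injective.extend_apply] using congrFun hU x

lemma exists_isGreenOn (D : Finset Vtx) : ∃ G, IsGreenOn D G := by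
  choose u hu using fun y : Vtx =>
    dirichletLaplacian_surjective D fun x => Real.pi / 2 * if (x : Vtx) = y then 1 else 0
  set U : Vtx → Vtx → ℝ := fun y => Function.extend (Subtype.val : D → Vtx) (u y) 0
  refine ⟨fun x y => if y ∈ D then U y x else 0, ?_, fun y hy x hx => ?_⟩
  · rintro x y (hx | hy)
    · simp [U, Function.extend_apply' (f := (Subtype.val : D → Vtx)) (u y) 0 x (by simpa using hx)]
    · simp [hy]
  · have h : U y x - neighborAvg (U y) x = _ := congrFun (hu y) ⟨x, hx⟩
    simp only [hy, if_true]
    linarith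

/-- The Green function of `D`, normalized by `π/2`. -/
def greenFn (D : Finset Vtx) : Vtx → Vtx → ℝ := (exists_isGreenOn D).choose

lemma isGreenOn_greenFn (D : Finset Vtx) : IsGreenOn D (greenFn D) :=
  (exists_isGreenOn D).choose_spec

lemma greenFn_of_notMem_left {x : Vtx} (hx : x ∉ D) (y : Vtx) : greenFn D x y = 0 :=
  (isGreenOn_greenFn D).1 x y (.inl hx)

lemma greenFn_of_notMem_right (x : Vtx) {y : Vtx} (hy : y ∉ D) : greenFn D x y = 0 :=
  (isGreenOn_greenFn D).1 x y (.inr hy)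

/-- The column of a pole outside `D` vanishes, so the Poisson equation needs no condition on it. -/
lemma greenFn_eq_neighborAvg_add {x : Vtx} (hx : x ∈ D) (y : Vtx) :
    greenFn D x y = neighborAvg (greenFn D · y) x + Real.pi / 2 * if x = y then 1 else 0 := by
  by_cases hy : y ∈ D
  · exact (isGreenOn_greenFn D).2 y hy x hx
  · have hxy : x ≠ y := fun h => hy (h ▸ hx)
    simp [greenFn_of_notMem_right _ hy, hxy, neighborAvg_const]

lemma eq_greenFn {G : Vtx → Vtx → ℝ} (hG : IsGreenOn D G) : G = greenFn D := by
  ext x y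
  by_cases hy : y ∈ D
  · have h := eq_zero_of_eq_neighborAvg (D := D) (f := (G · y) - (greenFn D · y))
      (fun x hx => by
        rw [map_sub, Pi.sub_apply, Pi.sub_apply, hG.2 y hy x hx, greenFn_eq_neighborAvg_add hx]
        ring)
      (fun x hx => by simp [hG.1 x y (.inl hx), greenFn_of_notMem_left hx])
    exact sub_eq_zero.1 (congrFun h x)
  · rw [hG.1 x y (.inr hy), greenFn_of_notMem_right x hy]

lemma greenFn_nonneg (D : Finset Vtx) (x y : Vtx) : 0 ≤ greenFn D x y := by
  have h := nonpos_of_le_neighborAvg (D := D) (f := -(greenFn D · y))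
    (fun x hx => by
      have : 0 ≤ Real.pi / 2 * if x = y then (1 : ℝ) else 0 := by positivity
      rw [map_neg, Pi.neg_apply, Pi.neg_apply, greenFn_eq_neighborAvg_add hx]
      linarith)
    (fun x hx => by simp [greenFn_of_notMem_left hx]) x
  simpa using h

lemma sum_mul_comp_add_right {u w : Vtx → ℝ} (hu : ∀ x ∉ D, u x = 0) (hw : ∀ x ∉ D, w x = 0)
    (e : Vtx) : ∑ x ∈ D, u x * w (x + e) = ∑ x ∈ D, u (x + -e) * w x := by
  rw [← finsum_eq_sum_of_support_subset _ (fun x hx => by_contra fun h => hx (by simp [hu x h])),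
    ← finsum_eq_sum_of_support_subset _ (fun x hx => by_contra fun h => hx (by simp [hw x h])),
    ← finsum_comp_equiv (Equiv.addRight e) (f := fun x => u (x + -e) * w x)]
  simp

lemma sum_mul_neighborAvg_comm {u w : Vtx → ℝ} (hu : ∀ x ∉ D, u x = 0)
    (hw : ∀ x ∉ D, w x = 0) :
    ∑ x ∈ D, u x * neighborAvg w x = ∑ x ∈ D, neighborAvg u x * w x := by
  simp only [neighborAvg_apply, sum_unitVecs, mul_div_assoc', div_mul_eq_mul_div, mul_add, add_mul,
    ← Finset.sum_div, Finset.sum_add_distrib, sum_mul_comp_add_right hu hw, Prod.neg_mk, neg_zero,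
    neg_neg]
  ring

lemma sum_mul_neighborAvg_self_le {u : Vtx → ℝ} (hu : ∀ x ∉ D, u x = 0) :
    ∑ x ∈ D, u x * neighborAvg u x ≤ ∑ x ∈ D, u x ^ 2 := by
  have hshift (e : Vtx) : ∑ x ∈ D, u (x + e) ^ 2 ≤ ∑ x ∈ D, u x ^ 2 := by
    calc ∑ x ∈ D, u (x + e) ^ 2 = ∑ x ∈ D.map (addRightEmbedding e), u x ^ 2 := by simp
      _ ≤ ∑ x ∈ D.map (addRightEmbedding e) ∪ D, u x ^ 2 :=
        Finset.sum_le_sum_of_subset_of_nonneg Finset.subset_union_left fun x _ _ => sq_nonneg _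
      _ = ∑ x ∈ D, u x ^ 2 := (Finset.sum_subset Finset.subset_union_right
        fun x _ hx => by simp [hu x hx]).symm
  have hprod (e : Vtx) : ∑ x ∈ D, u x * u (x + e) ≤ ∑ x ∈ D, u x ^ 2 := by
    have h : ∑ x ∈ D, u x * u (x + e) ≤ ∑ x ∈ D, (u x ^ 2 + u (x + e) ^ 2) / 2 :=
      Finset.sum_le_sum fun x _ => by linarith [two_mul_le_add_sq (u x) (u (x + e))]
    rw [← Finset.sum_div, Finset.sum_add_distrib] at h
    linarith [hshift e]
  simp only [neighborAvg_apply, sum_unitVecs, mul_div_assoc', mul_add, ← Finset.sum_div,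
    Finset.sum_add_distrib]
  linarith [hprod (1, 0), hprod (-1, 0), hprod (0, 1), hprod (0, -1)]

lemma greenFn_comm (D : Finset Vtx) (y z : Vtx) : greenFn D y z = greenFn D z y := by
  by_cases hy : y ∈ D
  swap
  · rw [greenFn_of_notMem_left hy, greenFn_of_notMem_right _ hy]
  by_cases hz : z ∈ D
  swap
  · rw [greenFn_of_notMem_right _ hz, greenFn_of_notMem_left hz]
  have hpair (a b : Vtx) (hb : b ∈ D) :
      ∑ x ∈ D, greenFn D x a * neighborAvg (greenFn D · b) x
        = ∑ x ∈ D, greenFn D x a * greenFn D x b - Real.pi / 2 * greenFn D b a := by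
    have hterm : ∀ x ∈ D, greenFn D x a * neighborAvg (greenFn D · b) x
        = greenFn D x a * greenFn D x b - if x = b then Real.pi / 2 * greenFn D x a else 0 :=
      fun x hx => by
        rw [greenFn_eq_neighborAvg_add hx b]
        split_ifs <;> ring
    rw [Finset.sum_congr rfl hterm, Finset.sum_sub_distrib]
    simp [hb]
  have hcomm : ∑ x ∈ D, greenFn D x y * neighborAvg (greenFn D · z) x
      = ∑ x ∈ D, greenFn D x z * neighborAvg (greenFn D · y) x :=
    (sum_mul_neighborAvg_comm (fun x hx => greenFn_of_notMem_left hx y)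
      (fun x hx => greenFn_of_notMem_left hx z)).trans
      (Finset.sum_congr rfl fun _ _ => mul_comm _ _)
  have hprod : ∑ x ∈ D, greenFn D x z * greenFn D x y = ∑ x ∈ D, greenFn D x y * greenFn D x z :=
    Finset.sum_congr rfl fun _ _ => mul_comm _ _
  rw [hpair y z hz, hpair z y hy, hprod] at hcomm
  exact (mul_left_cancel₀ (by positivity) (sub_right_injective hcomm)).symm

/-- The solution of the Dirichlet problem in `D` with data `f` outside `D`, i.e. the function
`x ↦ E_x[f(W_τ)]` for the exit time `τ` of simple random walk from `D`. -/
def harmonicExt (D : Finset Vtx) : (Vtx → ℝ) →ₗ[ℝ] (Vtx → ℝ) where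
  toFun f x := f x - 2 / Real.pi * ∑ y ∈ D, greenFn D x y * (f y - neighborAvg f y)
  map_add' f g := by
    ext x
    simp only [map_add, Pi.add_apply, add_sub_add_comm, mul_add, Finset.sum_add_distrib]
  map_smul' c f := by
    ext x
    simp only [map_smul, Pi.smul_apply, smul_eq_mul, RingHom.id_apply, ← mul_sub,
      mul_left_comm _ c, ← Finset.mul_sum]

lemma harmonicExt_of_notMem {x : Vtx} (hx : x ∉ D) (f : Vtx → ℝ) : harmonicExt D f x = f x := by
  simp [harmonicExt, greenFn_of_notMem_left hx]

lemma harmonicExt_eq_neighborAvg {x : Vtx} (hx : x ∈ D) (f : Vtx → ℝ) :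
    harmonicExt D f x = neighborAvg (harmonicExt D f) x := by
  have hext : harmonicExt D f
      = f - (2 / Real.pi) • ∑ y ∈ D, (f y - neighborAvg f y) • (greenFn D · y) := by
    ext z
    simp [harmonicExt, Finset.sum_apply, mul_comm]
  have hsum : ∑ y ∈ D, (f y - neighborAvg f y) * greenFn D x y
      = ∑ y ∈ D, (f y - neighborAvg f y) * neighborAvg (greenFn D · y) x
        + Real.pi / 2 * (f x - neighborAvg f x) := by
    simp only [greenFn_eq_neighborAvg_add hx, mul_add, Finset.sum_add_distrib]
    simp [hx, mul_comm]
  simp only [hext, map_sub, map_smul, map_sum, Pi.sub_apply, Pi.smul_apply, Finset.sum_apply,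
    smul_eq_mul, hsum]
  field_simp
  ring

lemma harmonicExt_eq_of_harmonic {f u : Vtx → ℝ} (hoff : ∀ x ∉ D, u x = f x)
    (hharm : ∀ x ∈ D, u x = neighborAvg u x) : harmonicExt D f = u := by
  refine sub_eq_zero.1 (eq_zero_of_eq_neighborAvg (D := D) (fun x hx => ?_) fun x hx => ?_)
  · rw [map_sub, Pi.sub_apply, Pi.sub_apply, ← harmonicExt_eq_neighborAvg hx, ← hharm x hx]
  · simp [harmonicExt_of_notMem hx, hoff x hx]

lemma harmonicExt_eq_self {f : Vtx → ℝ} (hharm : ∀ x ∈ D, f x = neighborAvg f x) :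
    harmonicExt D f = f :=
  harmonicExt_eq_of_harmonic (fun _ _ => rfl) hharm

lemma harmonicExt_le {f : Vtx → ℝ} {C : ℝ} (hf : ∀ x ∉ D, f x ≤ C) (x : Vtx) :
    harmonicExt D f x ≤ C := by
  have h := nonpos_of_le_neighborAvg (D := D) (f := harmonicExt D f - fun _ => C)
    (fun x hx => by
      rw [map_sub, Pi.sub_apply, Pi.sub_apply, ← harmonicExt_eq_neighborAvg hx, neighborAvg_const])
    (fun x hx => by simpa [harmonicExt_of_notMem hx] using hf x hx) x
  simpa using h

lemma harmonicExt_nonneg {f : Vtx → ℝ} (hf : ∀ x ∉ D, 0 ≤ f x) (x : Vtx) :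
    0 ≤ harmonicExt D f x := by
  simpa using harmonicExt_le (D := D) (f := -f) (C := 0) (fun x hx => by simpa using hf x hx) x

/-- The exit kernel (Poisson kernel) of `D`: the probability that simple random walk started at
`v` leaves `D` through `w`. It is the unit mass at `v` when `v ∉ D`. -/
def exitKernel (D : Finset Vtx) (v w : Vtx) : ℝ := harmonicExt D (Pi.single w 1) v

lemma exitKernel_nonneg (D : Finset Vtx) (v w : Vtx) : 0 ≤ exitKernel D v w :=
  harmonicExt_nonneg
    (fun x _ => (Pi.single_nonneg.2 zero_le_one : (0 : Vtx → ℝ) ≤ Pi.single w 1) x) v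

lemma exitKernel_eq_neighborAvg {v : Vtx} (hv : v ∈ D) (w : Vtx) :
    exitKernel D v w = neighborAvg (exitKernel D · w) v :=
  harmonicExt_eq_neighborAvg hv _

lemma exitKernel_of_mem (v : Vtx) {w : Vtx} (hw : w ∈ D) : exitKernel D v w = 0 := by
  have h : harmonicExt D (Pi.single w 1) = 0 := harmonicExt_eq_of_harmonic
    (fun x hx => by simp [ne_of_mem_of_not_mem hw hx |>.symm]) (by simp)
  exact congrFun h v

lemma exitKernel_of_notMem {v : Vtx} (hv : v ∉ D) :
    exitKernel D v = Pi.single v 1 := by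
  ext w
  rw [exitKernel, harmonicExt_of_notMem hv, Pi.single_comm]

lemma harmonicExt_eq_sum_exitKernel {L : Finset Vtx} {f : Vtx → ℝ} (hf : ∀ x ∉ L, f x = 0)
    (v : Vtx) : harmonicExt D f v = ∑ w ∈ L, exitKernel D v w * f w := by
  have hsum : f = ∑ w ∈ L, f w • (Pi.single w 1 : Vtx → ℝ) := by
    ext x
    by_cases h : x ∈ L
    · simp [Pi.single_apply, h]
    · simp [Pi.single_apply, h, hf x h]
  conv_lhs => rw [hsum]
  simp [exitKernel, mul_comm]

lemma greenFn_eq_sub_harmonicExt (hDE : D ⊆ E) (x y : Vtx) :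
    greenFn D x y = greenFn E x y - harmonicExt D (greenFn E · y) x := by
  suffices h : IsGreenOn D fun x y => greenFn E x y - harmonicExt D (greenFn E · y) x from
    (congrFun₂ (eq_greenFn h) x y).symm
  refine ⟨?_, fun y _ x hx => ?_⟩
  · intro x y hxy
    by_cases hx : x ∈ D
    · have hy : y ∉ D := hxy.resolve_left (not_not_intro hx)
      have hharm : ∀ z ∈ D, greenFn E z y = neighborAvg (greenFn E · y) z := fun z hz => by
        simpa [ne_of_mem_of_not_mem hz hy] using greenFn_eq_neighborAvg_add (hDE hz) y
      simp only [harmonicExt_eq_self hharm, sub_self]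
    · simp only [harmonicExt_of_notMem hx, sub_self]
  · change greenFn E x y - harmonicExt D (greenFn E · y) x
      = neighborAvg ((greenFn E · y) - harmonicExt D (greenFn E · y)) x + _
    rw [map_sub, Pi.sub_apply, ← harmonicExt_eq_neighborAvg hx, greenFn_eq_neighborAvg_add (hDE hx)]
    ring

lemma greenFn_mono (hDE : D ⊆ E) (x y : Vtx) : greenFn D x y ≤ greenFn E x y := by
  rw [greenFn_eq_sub_harmonicExt hDE]
  linarith [harmonicExt_nonneg (D := D) (fun z _ => greenFn_nonneg E z y) x]

lemma sum_exitKernel_mul_greenFn (hDE : D ⊆ E) (x y : Vtx) :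
    ∑ w ∈ E, exitKernel D x w * greenFn E w y = greenFn E x y - greenFn D x y := by
  rw [greenFn_eq_sub_harmonicExt hDE, sub_sub_cancel,
    harmonicExt_eq_sum_exitKernel fun _ hz => greenFn_of_notMem_left hz y]

end PotentialTheory

noncomputable section LogarithmicBarrier

/-- The squared Euclidean distance of two vertices. -/
def distSq (x y : Vtx) : ℝ := ((x.1 : ℝ) - y.1) ^ 2 + ((x.2 : ℝ) - y.2) ^ 2

lemma distSq_nonneg (x y : Vtx) : 0 ≤ distSq x y := add_nonneg (sq_nonneg _) (sq_nonneg _)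

lemma distSq_self (x : Vtx) : distSq x x = 0 := by simp [distSq]

lemma log_distSq_add_one_le_neighborAvg (v w : Vtx) :
    Real.log (distSq w v + 1) ≤ neighborAvg (fun z => Real.log (distSq z v + 1)) w := by
  rw [neighborAvg_eq, le_div_iff₀ four_pos]
  simp only [distSq]
  push_cast
  rw [add_sub_right_comm (w.1 : ℝ), sub_right_comm (w.1 : ℝ), add_sub_right_comm (w.2 : ℝ),
    sub_right_comm (w.2 : ℝ)]
  generalize (w.1 : ℝ) - v.1 = a, (w.2 : ℝ) - v.2 = b
  rw [← Real.log_mul (by positivity) (by positivity), ← Real.log_mul (by positivity)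
    (by positivity), ← Real.log_mul (by positivity) (by positivity), mul_comm,
    show (4 : ℝ) = (4 : ℕ) by norm_num, ← Real.log_pow]
  refine Real.log_le_log (by positivity) (sub_nonneg.1 ?_)
  calc (0 : ℝ) ≤ 2 * (a ^ 2 + b ^ 2 + 2) ^ 2 + 16 * (a * b) ^ 2 + 4 * (a ^ 2 + b ^ 2) + 7 := by
        positivity
    _ = _ := by ring

lemma neighborAvg_log_distSq_sub_one_le {z w : Vtx} (h : 9 ≤ distSq w z) :
    neighborAvg (fun y => Real.log (distSq y z - 1)) w ≤ Real.log (distSq w z - 1) := by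
  rw [neighborAvg_eq, div_le_iff₀ four_pos]
  simp only [distSq] at h ⊢
  push_cast
  rw [add_sub_right_comm (w.1 : ℝ), sub_right_comm (w.1 : ℝ), add_sub_right_comm (w.2 : ℝ),
    sub_right_comm (w.2 : ℝ)]
  generalize (w.1 : ℝ) - z.1 = a, (w.2 : ℝ) - z.2 = b at h ⊢
  have h₁ : 0 < (a + 1) ^ 2 + b ^ 2 - 1 := by nlinarith [sq_nonneg (a + 3)]
  have h₂ : 0 < (a - 1) ^ 2 + b ^ 2 - 1 := by nlinarith [sq_nonneg (a - 3)]
  have h₃ : 0 < a ^ 2 + (b + 1) ^ 2 - 1 := by nlinarith [sq_nonneg (b + 3)]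
  have h₄ : 0 < a ^ 2 + (b - 1) ^ 2 - 1 := by nlinarith [sq_nonneg (b - 3)]
  rw [← Real.log_mul h₁.ne' h₂.ne', ← Real.log_mul (by positivity) h₃.ne',
    ← Real.log_mul (by positivity) h₄.ne', mul_comm (Real.log _) 4,
    show (4 : ℝ) = (4 : ℕ) by norm_num, ← Real.log_pow]
  refine Real.log_le_log (by positivity) (sub_nonneg.1 ?_)
  calc (0 : ℝ) ≤ 6 * (a ^ 2 + b ^ 2) ^ 2 - 16 * (a ^ 2 * b ^ 2) - 4 * (a ^ 2 + b ^ 2) + 1 := by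
        nlinarith [sq_nonneg (a ^ 2 - b ^ 2), sq_nonneg (a * b)]
    _ = _ := by ring

/-- The difference of two logarithmic potentials, superharmonic away from `z` and with a definite
amount of charge at `v`. -/
def logBarrier (v z w : Vtx) : ℝ := Real.log (distSq w z - 1) - Real.log (distSq w v + 1)

lemma neighborAvg_logBarrier (v z w : Vtx) :
    neighborAvg (logBarrier v z) w = neighborAvg (fun y => Real.log (distSq y z - 1)) w
      - neighborAvg (fun y => Real.log (distSq y v + 1)) w := by
  rw [← Pi.sub_apply, ← map_sub]
  rfl

lemma neighborAvg_logBarrier_le {v z w : Vtx} (h : 9 ≤ distSq w z) :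
    neighborAvg (logBarrier v z) w ≤ logBarrier v z w := by
  rw [neighborAvg_logBarrier, logBarrier]
  linarith [neighborAvg_log_distSq_sub_one_le h, log_distSq_add_one_le_neighborAvg v w]

lemma neighborAvg_logBarrier_add_log_two_le {v z : Vtx} (h : 9 ≤ distSq v z) :
    neighborAvg (logBarrier v z) v + Real.log 2 ≤ logBarrier v z v := by
  have hpole : neighborAvg (fun y => Real.log (distSq y v + 1)) v = Real.log 2 := by
    rw [neighborAvg_eq]
    norm_num [distSq]
    ring
  rw [neighborAvg_logBarrier, hpole, logBarrier, distSq_self, zero_add, Real.log_one]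
  linarith [neighborAvg_log_distSq_sub_one_le h]

/-- The open box of `ℓ^∞`-radius `m` around `v`. -/
def box (m : ℤ) (v : Vtx) : Finset Vtx :=
  Finset.Ioo (v.1 - m) (v.1 + m) ×ˢ Finset.Ioo (v.2 - m) (v.2 + m)

lemma mem_box {m : ℤ} {v w : Vtx} :
    w ∈ box m v ↔ (v.1 - m < w.1 ∧ w.1 < v.1 + m) ∧ v.2 - m < w.2 ∧ w.2 < v.2 + m := by
  simp [box]

lemma sq_le_distSq_of_notMem_box {m : ℤ} (hm : 0 ≤ m) {v w : Vtx} (hw : w ∉ box m v) :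
    (m : ℝ) ^ 2 ≤ distSq w v := by
  have hcoord : m ≤ |w.1 - v.1| ∨ m ≤ |w.2 - v.2| := by
    rw [mem_box] at hw
    rw [le_abs, le_abs]
    lia
  have hsq (k : ℤ) (hk : m ≤ |k|) : (m : ℝ) ^ 2 ≤ (k : ℝ) ^ 2 := by
    have : m ^ 2 ≤ k ^ 2 := sq_le_sq.2 (by rwa [abs_of_nonneg hm])
    exact_mod_cast this
  rw [distSq]
  rcases hcoord with h | h <;> have := hsq _ h <;> push_cast at this <;>
    nlinarith [sq_nonneg ((w.1 : ℝ) - v.1), sq_nonneg ((w.2 : ℝ) - v.2)]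

/-- `D` lies in a half-plane `{w | -m ≤ ⟨w - v, e⟩}` with `e` a unit vector of `ℤ²`: from `v`, one
leaves `D` after at most `m + 1` steps in the direction `-e`. -/
def NearSide (D : Finset Vtx) (v : Vtx) (m : ℤ) : Prop :=
  0 ≤ m ∧ ∃ e ∈ unitVecs, ∀ w ∈ D, -m ≤ (w.1 - v.1) * e.1 + (w.2 - v.2) * e.2

lemma NearSide.mono {D E : Finset Vtx} {v : Vtx} {m : ℤ} (h : NearSide E v m) (hDE : D ⊆ E) :
    NearSide D v m :=
  ⟨h.1, h.2.imp fun _ he => ⟨he.1, fun w hw => he.2 w (hDE hw)⟩⟩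

lemma NearSide.union_box {D : Finset Vtx} {v : Vtx} {m : ℤ} (h : NearSide D v m) :
    NearSide (D ∪ box m v) v m := by
  obtain ⟨hm, e, he, hD⟩ := h
  refine ⟨hm, e, he, fun w hw => (Finset.mem_union.1 hw).elim (hD w) fun hw => ?_⟩
  rw [mem_box] at hw
  simp only [unitVecs, Finset.mem_insert, Finset.mem_singleton] at he
  rcases he with rfl | rfl | rfl | rfl <;> simp only <;> lia

/-- The constant in the bound `greenFn D w v ≤ greenBoundConst` of the logarithmic barrier. -/
def greenBoundConst : ℝ := Real.pi / 2 / Real.log 2 * Real.log 25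

lemma greenBoundConst_nonneg : 0 ≤ greenBoundConst := by
  have := Real.log_pos (show (1 : ℝ) < 2 by norm_num)
  have := Real.log_pos (show (1 : ℝ) < 25 by norm_num)
  unfold greenBoundConst
  positivity

/-- The pole of the barrier: the mirror image of `v` in a line just beyond the half-plane. -/
def barrierPole (v e : Vtx) (m : ℤ) : Vtx := v - (2 * (m + 2)) • e

section Barrier

variable {v e : Vtx} {m : ℤ}

lemma distSq_barrierPole (he : e ∈ unitVecs) (w : Vtx) :
    distSq w (barrierPole v e m) = distSq w v
      + 4 * (m + 2) * ((w.1 - v.1) * e.1 + (w.2 - v.2) * e.2 + (m + 2) : ℝ) := by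
  simp only [unitVecs, Finset.mem_insert, Finset.mem_singleton] at he
  rcases he with rfl | rfl | rfl | rfl <;> simp [distSq, barrierPole] <;> ring

lemma mul_self_le_distSq (he : e ∈ unitVecs) (w : Vtx) :
    ((w.1 - v.1) * e.1 + (w.2 - v.2) * e.2 : ℝ) ^ 2 ≤ distSq w v := by
  simp only [unitVecs, Finset.mem_insert, Finset.mem_singleton] at he
  rcases he with rfl | rfl | rfl | rfl <;> simp [distSq, sq_nonneg, sub_sq_comm (v.1 : ℝ),
    sub_sq_comm (v.2 : ℝ)]

lemma nine_le_distSq_barrierPole (hm : 0 ≤ m) (he : e ∈ unitVecs) {w : Vtx}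
    (hw : -m - 1 ≤ (w.1 - v.1) * e.1 + (w.2 - v.2) * e.2) :
    9 ≤ distSq w (barrierPole v e m) := by
  have hw' : (-m - 1 : ℝ) ≤ (w.1 - v.1) * e.1 + (w.2 - v.2) * e.2 := by exact_mod_cast hw
  have hm' : (0 : ℝ) ≤ m := by exact_mod_cast hm
  rw [distSq_barrierPole he]
  nlinarith [mul_self_le_distSq he w (v := v)]

lemma logBarrier_nonneg (hm : 0 ≤ m) (he : e ∈ unitVecs) {w : Vtx}
    (hw : -m - 1 ≤ (w.1 - v.1) * e.1 + (w.2 - v.2) * e.2) :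
    0 ≤ logBarrier v (barrierPole v e m) w := by
  have hw' : (-m - 1 : ℝ) ≤ (w.1 - v.1) * e.1 + (w.2 - v.2) * e.2 := by exact_mod_cast hw
  have hm' : (0 : ℝ) ≤ m := by exact_mod_cast hm
  refine sub_nonneg.2 (Real.log_le_log (by linarith [distSq_nonneg w v]) ?_)
  rw [distSq_barrierPole he]
  nlinarith

lemma logBarrier_le (he : e ∈ unitVecs) (hm : 0 ≤ m) {w : Vtx}
    (hw : -m - 1 ≤ (w.1 - v.1) * e.1 + (w.2 - v.2) * e.2) (hbox : w ∉ box m v) :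
    logBarrier v (barrierPole v e m) w ≤ Real.log 25 := by
  have hnine := nine_le_distSq_barrierPole hm he hw
  have hv := distSq_nonneg w v
  have hm' : (0 : ℝ) ≤ m := by exact_mod_cast hm
  have hratio : distSq w (barrierPole v e m) - 1 ≤ 25 * (distSq w v + 1) := by
    rw [distSq_barrierPole he]
    set r := Real.sqrt (distSq w v)
    have hr : r ^ 2 = distSq w v := Real.sq_sqrt hv
    have hmr : (m : ℝ) ≤ r := Real.le_sqrt_of_sq_le (sq_le_distSq_of_notMem_box hm hbox)
    have hproj : ((w.1 - v.1) * e.1 + (w.2 - v.2) * e.2 : ℝ) ≤ r :=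
      Real.le_sqrt_of_sq_le (mul_self_le_distSq he w)
    rw [← hr]
    nlinarith [sq_nonneg (4 * r - 3)]
  rw [logBarrier, ← Real.log_div (by linarith) (by linarith)]
  exact Real.log_le_log (div_pos (by linarith) (by linarith))
    ((div_le_iff₀ (by linarith)).2 hratio)

end Barrier

/-- The maximum principle for `G(·,v) - c · logBarrier`. -/
lemma greenFn_le_logBarrier {D : Finset Vtx} {v e : Vtx} {m : ℤ} (hm : 0 ≤ m)
    (he : e ∈ unitVecs) (hD : ∀ w ∈ D, -m ≤ (w.1 - v.1) * e.1 + (w.2 - v.2) * e.2) :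
    ∀ w ∈ D, greenFn D w v ≤ Real.pi / 2 / Real.log 2 * logBarrier v (barrierPole v e m) w := by
  set c : ℝ := Real.pi / 2 / Real.log 2
  have : 0 < Real.log 2 := Real.log_pos one_lt_two
  have hc : 0 < c := by positivity
  have hclog : c * Real.log 2 = Real.pi / 2 := by simp only [c]; field_simp
  suffices h : ∀ w ∈ D, ((greenFn D · v) - c • logBarrier v (barrierPole v e m)) w ≤ 0 from
    fun w hw => sub_nonpos.1 (h w hw)
  refine nonpos_of_le_neighborAvg_of_boundary (fun x hx => ?_) fun x hx e' he' hout => ?_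
  · have hnine := nine_le_distSq_barrierPole (v := v) hm he (w := x) (by linarith [hD x hx])
    simp only [map_sub, map_smul, Pi.sub_apply, Pi.smul_apply, smul_eq_mul,
      greenFn_eq_neighborAvg_add hx]
    by_cases hxv : x = v
    · subst hxv
      simp only [if_true]
      nlinarith [neighborAvg_logBarrier_add_log_two_le hnine]
    · simp only [hxv, if_false]
      nlinarith [neighborAvg_logBarrier_le (v := v) hnine]
  · have hstep : -m - 1 ≤ ((x + e').1 - v.1) * e.1 + ((x + e').2 - v.2) * e.2 := by
      have := hD x hx
      simp only [unitVecs, Finset.mem_insert, Finset.mem_singleton] at he he'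
      rcases he with rfl | rfl | rfl | rfl <;> rcases he' with rfl | rfl | rfl | rfl <;>
        simp at this ⊢ <;> lia
    simpa [greenFn_of_notMem_left hout] using mul_nonneg hc.le (logBarrier_nonneg hm he hstep)

lemma greenFn_le_of_notMem_box {D : Finset Vtx} {v w : Vtx} {m : ℤ} (hD : NearSide D v m)
    (hw : w ∉ box m v) : greenFn D w v ≤ greenBoundConst := by
  by_cases hwD : w ∈ D
  swap
  · exact (greenFn_of_notMem_left hwD v).trans_le greenBoundConst_nonneg
  obtain ⟨hm, e, he, hD⟩ := hD
  have := Real.log_pos one_lt_two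
  exact (greenFn_le_logBarrier hm he hD w hwD).trans
    (mul_le_mul_of_nonneg_left (logBarrier_le he hm (by linarith [hD w hwD]) hw) (by positivity))

end LogarithmicBarrier

section PosSemidefForm

variable {V : Type*} [AddCommGroup V] [Module ℝ V] {B : LinearMap.BilinForm ℝ V}

lemma abs_apply_le_of_isPosSemidef (hB : B.IsPosSemidef) {C : ℝ} {a b : V} (ha : B a a ≤ C)
    (hb : B b b ≤ C) : |B a b| ≤ C := by
  have hsub := hB.nonneg (a - b)
  have hadd := hB.nonneg (a + b)
  simp only [map_add, map_sub, LinearMap.add_apply, LinearMap.sub_apply, hB.isSymm.eq b a]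
    at hsub hadd
  rw [abs_le]
  constructor <;> linarith

lemma apply_sub_sub_le_of_isPosSemidef (hB : B.IsPosSemidef) {C : ℝ} {a b : V} (ha : B a a ≤ C)
    (hb : B b b ≤ C) : B (a - b) (a - b) ≤ 4 * C := by
  have hab := abs_le.1 (abs_apply_le_of_isPosSemidef hB ha hb)
  simp only [map_sub, LinearMap.sub_apply, hB.isSymm.eq b a]
  linarith

lemma apply_sum_smul_le_of_isPosSemidef (hB : B.IsPosSemidef) {ι : Type*} {I : Finset ι}
    (c : ι → ℝ) {a : ι → V} {C : ℝ} (ha : ∀ i ∈ I, B (a i) (a i) ≤ C) :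
    B (∑ i ∈ I, c i • a i) (∑ i ∈ I, c i • a i) ≤ (∑ i ∈ I, |c i|) ^ 2 * C := by
  rw [sq, Finset.sum_mul_sum, Finset.sum_mul]
  simp only [map_sum, map_smul, LinearMap.sum_apply, LinearMap.smul_apply, smul_eq_mul,
    Finset.mul_sum, Finset.sum_mul]
  refine Finset.sum_le_sum fun i hi => Finset.sum_le_sum fun j hj => ?_
  calc c i * (c j * B (a j) (a i)) ≤ |c i * (c j * B (a j) (a i))| := le_abs_self _
    _ = |c i| * |c j| * |B (a j) (a i)| := by rw [abs_mul, abs_mul, mul_assoc]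
    _ ≤ |c i| * |c j| * C := by
        gcongr
        exact abs_apply_le_of_isPosSemidef hB (ha j hj) (ha i hi)

end PosSemidefForm

noncomputable section GreenForm

variable {D E : Finset Vtx}

/-- The energy form `(a, b) ↦ ∑ a(x) b(y) G_D(x, y)` on charges, i.e. the covariance of the linear
functionals with coefficients `a`, `b` of the Gaussian free field on `D`. -/
def greenForm (D : Finset Vtx) : LinearMap.BilinForm ℝ (Vtx → ℝ) :=
  ∑ x ∈ D, ∑ y ∈ D, greenFn D x y • (LinearMap.proj x).smulRight (LinearMap.proj y)

lemma greenForm_apply (D : Finset Vtx) (a b : Vtx → ℝ) :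
    greenForm D a b = ∑ x ∈ D, ∑ y ∈ D, a x * b y * greenFn D x y := by
  simp [greenForm, LinearMap.sum_apply, mul_comm]

lemma greenForm_eq_sum_mul_left (D : Finset Vtx) (a b : Vtx → ℝ) :
    greenForm D a b = ∑ y ∈ D, b y * ∑ x ∈ D, a x * greenFn D x y := by
  rw [greenForm_apply, Finset.sum_comm]
  simp only [Finset.mul_sum, mul_assoc, mul_left_comm]

lemma greenForm_comm (D : Finset Vtx) (a b : Vtx → ℝ) : greenForm D a b = greenForm D b a := by
  rw [greenForm_apply, greenForm_apply, Finset.sum_comm]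
  simp only [greenFn_comm D, mul_comm]

/-- The energy of `a` is the Dirichlet energy of its potential, up to a constant. -/
lemma isPosSemidef_greenForm (D : Finset Vtx) : (greenForm D).IsPosSemidef where
  eq a b := greenForm_comm D a b
  nonneg a := by
    set u : Vtx → ℝ := ∑ x ∈ D, a x • (greenFn D · x) with hu
    have hoff : ∀ x ∉ D, u x = 0 := fun x hx => by simp [hu, greenFn_of_notMem_left hx]
    have hpoisson : ∀ x ∈ D, a x = 2 / Real.pi * (u x - neighborAvg u x) := fun x hx => by
      simp only [hu, map_sum, map_smul, Finset.sum_apply, Pi.smul_apply, smul_eq_mul,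
        greenFn_eq_neighborAvg_add hx, mul_add, Finset.sum_add_distrib, add_sub_cancel_left]
      simp [hx]
      field_simp
    have henergy : greenForm D a a = 2 / Real.pi *
        (∑ x ∈ D, u x ^ 2 - ∑ x ∈ D, u x * neighborAvg u x) := by
      rw [greenForm_apply, ← Finset.sum_sub_distrib, Finset.mul_sum]
      refine Finset.sum_congr rfl fun x hx => ?_
      have hux : ∑ y ∈ D, a x * a y * greenFn D x y = a x * u x := by
        simp [hu, Finset.mul_sum, mul_assoc]
      rw [hux, hpoisson x hx]
      ring
    rw [henergy]
    exact mul_nonneg (by positivity) (sub_nonneg.2 (sum_mul_neighborAvg_self_le hoff))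

lemma greenForm_single (D : Finset Vtx) (x y : Vtx) :
    greenForm D (Pi.single x 1) (Pi.single y 1) = greenFn D x y := by
  have h : (if y ∈ D then if x ∈ D then greenFn D x y else 0 else 0) = greenFn D x y := by
    split_ifs with hy hx
    · rfl
    · exact (greenFn_of_notMem_left hx y).symm
    · exact (greenFn_of_notMem_right x hy).symm
  simpa [greenForm_apply, Pi.single_apply] using h

lemma greenForm_mono (hDE : D ⊆ E) {a : Vtx → ℝ} (ha : 0 ≤ a) :
    greenForm D a a ≤ greenForm E a a := by
  have hnonneg (x y : Vtx) : 0 ≤ a x * a y * greenFn E x y :=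
    mul_nonneg (mul_nonneg (ha x) (ha y)) (greenFn_nonneg E x y)
  rw [greenForm_apply, greenForm_apply]
  calc ∑ x ∈ D, ∑ y ∈ D, a x * a y * greenFn D x y
      ≤ ∑ x ∈ D, ∑ y ∈ D, a x * a y * greenFn E x y := by
        gcongr with x _ y _
        · exact mul_nonneg (ha x) (ha y)
        · exact greenFn_mono hDE x y
    _ ≤ ∑ x ∈ D, ∑ y ∈ E, a x * a y * greenFn E x y := Finset.sum_le_sum fun x _ =>
        Finset.sum_le_sum_of_subset_of_nonneg hDE fun y _ _ => hnonneg x y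
    _ ≤ ∑ x ∈ E, ∑ y ∈ E, a x * a y * greenFn E x y :=
        Finset.sum_le_sum_of_subset_of_nonneg hDE fun x _ _ =>
          Finset.sum_nonneg fun y _ => hnonneg x y

/-- The balayage of a charge out of `D`: each charge in `D` is replaced by its exit distribution. -/
def swept (D : Finset Vtx) : (Vtx → ℝ) →ₗ[ℝ] (Vtx → ℝ) where
  toFun a w := ∑ x ∈ D, a x * exitKernel D x w + if w ∈ D then 0 else a w
  map_add' a b := by
    ext w
    simp only [Pi.add_apply, add_mul, Finset.sum_add_distrib]
    split_ifs <;> ring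
  map_smul' c a := by
    ext w
    simp only [Pi.smul_apply, smul_eq_mul, RingHom.id_apply, mul_add, Finset.mul_sum, mul_assoc]
    split_ifs <;> simp

lemma swept_apply (D : Finset Vtx) (a : Vtx → ℝ) (w : Vtx) :
    swept D a w = ∑ x ∈ D, a x * exitKernel D x w + if w ∈ D then 0 else a w := rfl

lemma swept_of_mem {w : Vtx} (hw : w ∈ D) (a : Vtx → ℝ) : swept D a w = 0 := by
  simp [swept_apply, hw, exitKernel_of_mem _ hw]

lemma swept_single (D : Finset Vtx) (x : Vtx) : swept D (Pi.single x 1) = exitKernel D x := by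
  ext w
  by_cases hx : x ∈ D
  · have hxw : w ∉ D → w ≠ x := fun hw h => hw (h ▸ hx)
    simp +contextual [swept_apply, Pi.single_apply, hx, hxw]
  · have hxw : w ∈ D → w ≠ x := fun hw h => hx (h ▸ hw)
    simp +contextual [swept_apply, Pi.single_apply, hx, exitKernel_of_notMem hx, hxw]

/-- The strong Markov property at the exit time of `B`. -/
lemma swept_exitKernel {B : Finset Vtx} (hBD : B ⊆ D) (v : Vtx) :
    swept D (exitKernel B v) = exitKernel D v := by
  ext w
  have hself : harmonicExt B (exitKernel D · w) = (exitKernel D · w) :=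
    harmonicExt_eq_self fun x hx => exitKernel_eq_neighborAvg (hBD hx) w
  have hsupp : ∀ x ∉ insert w D, exitKernel D x w = 0 := fun x hx => by
    rw [Finset.mem_insert, not_or] at hx
    rw [exitKernel_of_notMem hx.2, Pi.single_eq_of_ne' hx.1]
  rw [← congrFun hself v, harmonicExt_eq_sum_exitKernel hsupp, swept_apply]
  by_cases hw : w ∈ D
  · simp [hw]
  · simp [hw, exitKernel_of_notMem hw, add_comm]

lemma sum_swept_mul_greenFn (hDE : D ⊆ E) (a : Vtx → ℝ) (y : Vtx) :
    ∑ w ∈ E, swept D a w * greenFn E w y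
      = ∑ x ∈ E, a x * greenFn E x y - ∑ x ∈ D, a x * greenFn D x y := by
  have hin : ∑ w ∈ E, (∑ x ∈ D, a x * exitKernel D x w) * greenFn E w y
      = ∑ x ∈ D, a x * greenFn E x y - ∑ x ∈ D, a x * greenFn D x y := by
    simp only [Finset.sum_mul, mul_assoc]
    rw [Finset.sum_comm]
    simp only [← Finset.mul_sum, sum_exitKernel_mul_greenFn hDE, mul_sub, Finset.sum_sub_distrib]
  have hout : ∑ w ∈ E, (if w ∈ D then 0 else a w) * greenFn E w y
      = ∑ x ∈ E \ D, a x * greenFn E x y := by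
    rw [Finset.sdiff_eq_filter, Finset.sum_filter]
    exact Finset.sum_congr rfl fun w _ => by split_ifs <;> simp
  simp only [swept_apply, add_mul, Finset.sum_add_distrib]
  rw [hin, hout, ← Finset.sum_sdiff hDE]
  ring

lemma greenForm_swept_left (hDE : D ⊆ E) (a b : Vtx → ℝ) :
    greenForm E (swept D a) b = greenForm E a b - greenForm D a b := by
  simp only [greenForm_eq_sum_mul_left E, sum_swept_mul_greenFn hDE, mul_sub,
    Finset.sum_sub_distrib]
  congr 1
  rw [greenForm_eq_sum_mul_left]
  refine (Finset.sum_subset hDE fun y _ hy => ?_).symm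
  simp [greenFn_of_notMem_right _ hy]

lemma greenForm_swept_right_self (a b : Vtx → ℝ) : greenForm D a (swept D b) = 0 := by
  rw [greenForm_apply]
  exact Finset.sum_eq_zero fun x _ => Finset.sum_eq_zero fun y hy => by simp [swept_of_mem hy]

lemma greenForm_swept_swept (hDE : D ⊆ E) (a b : Vtx → ℝ) :
    greenForm E (swept D a) (swept D b) = greenForm E a b - greenForm D a b := by
  rw [greenForm_swept_left hDE, greenForm_swept_right_self, sub_zero, greenForm_comm,
    greenForm_swept_left hDE, greenForm_comm E, greenForm_comm D]

lemma greenForm_sub_swept (hDE : D ⊆ E) (a b : Vtx → ℝ) :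
    greenForm E (a - swept D a) (b - swept D b) = greenForm D a b := by
  have hright : greenForm E a (swept D b) = greenForm E a b - greenForm D a b := by
    rw [greenForm_comm, greenForm_swept_left hDE, greenForm_comm E, greenForm_comm D]
  simp only [map_sub, LinearMap.sub_apply, greenForm_swept_swept hDE, greenForm_swept_left hDE,
    hright]
  ring

lemma greenForm_exitKernel (hDE : D ⊆ E) (x y : Vtx) :
    greenForm E (exitKernel D x) (exitKernel D y) = greenFn E x y - greenFn D x y := by
  rw [← swept_single, ← swept_single, greenForm_swept_swept hDE, greenForm_single,
    greenForm_single]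

lemma greenForm_exitKernel_self_le (hDE : D ⊆ E) {v : Vtx} {C : ℝ} (hC : 0 ≤ C)
    (h : ∀ w ∈ E, w ∉ D → greenFn E w v ≤ C) :
    greenForm E (exitKernel D v) (exitKernel D v) ≤ C := by
  rw [greenForm_exitKernel hDE, greenFn_eq_sub_harmonicExt hDE, sub_sub_cancel]
  refine harmonicExt_le (fun w hw => ?_) v
  by_cases hwE : w ∈ E
  · exact h w hwE hw
  · exact (greenFn_of_notMem_left hwE v).trans_le hC

end GreenForm

noncomputable section Translation

variable (D : Finset Vtx) (h : Vtx)

lemma add_mem_map_addRight {x : Vtx} : x + h ∈ D.map (addRightEmbedding h) ↔ x ∈ D := by simp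

lemma harmonicExt_map_addRight (f : Vtx → ℝ) (x : Vtx) :
    harmonicExt (D.map (addRightEmbedding h)) f (x + h) = harmonicExt D (fun z => f (z + h)) x := by
  have hext := harmonicExt_eq_of_harmonic (D := D) (f := fun z => f (z + h))
    (u := fun z => harmonicExt (D.map (addRightEmbedding h)) f (z + h))
    (fun x hx => harmonicExt_of_notMem (mt (add_mem_map_addRight D h).1 hx) f)
    (fun x hx => by
      rw [neighborAvg_comp_add_right,
        ← harmonicExt_eq_neighborAvg ((add_mem_map_addRight D h).2 hx)])
  exact (congrFun hext x).symm

lemma exitKernel_map_addRight (v w : Vtx) :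
    exitKernel (D.map (addRightEmbedding h)) (v + h) (w + h) = exitKernel D v w := by
  have hsingle : (fun z => (Pi.single (w + h) 1 : Vtx → ℝ) (z + h)) = Pi.single w 1 := by
    ext z
    simp [Pi.single_apply]
  rw [exitKernel, harmonicExt_map_addRight, hsingle, exitKernel]

lemma greenFn_map_addRight (x y : Vtx) :
    greenFn (D.map (addRightEmbedding h)) (x + h) (y + h) = greenFn D x y := by
  suffices hG : IsGreenOn D fun x y => greenFn (D.map (addRightEmbedding h)) (x + h) (y + h) from
    congrFun₂ (eq_greenFn hG) x y
  refine ⟨fun x y hxy => (isGreenOn_greenFn _).1 _ _ (by simpa using hxy), fun y _ x hx => ?_⟩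
  beta_reduce
  rw [greenFn_eq_neighborAvg_add ((add_mem_map_addRight D h).2 hx),
    neighborAvg_comp_add_right (greenFn (D.map (addRightEmbedding h)) · (y + h))]
  simp

lemma greenForm_map_addRight (a b : Vtx → ℝ) :
    greenForm (D.map (addRightEmbedding h)) a b
      = greenForm D (fun w => a (w + h)) (fun w => b (w + h)) := by
  simp [greenForm_apply, greenFn_map_addRight]

lemma box_add (m : ℤ) (v : Vtx) : box m (v + h) = (box m v).map (addRightEmbedding h) := by
  ext w
  rw [← sub_add_cancel w h, add_mem_map_addRight, mem_box, mem_box]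
  simp only [Prod.fst_add, Prod.snd_add, Prod.fst_sub, Prod.snd_sub]
  lia

end Translation

noncomputable section CovarianceComparison

variable {ι : Type*} {I : Finset ι} {m : ι → ℤ} {E : Finset Vtx} {h v : Vtx}

/-- The linear combination `∑ i, c i • exitKernel (D i) v` of exit distributions; these are the
coefficients of a weighted sum of multiscale harmonic averages of the field around `v`. -/
def multiscaleCharge (I : Finset ι) (c : ι → ℝ) (D : ι → Finset Vtx) (v : Vtx) : Vtx → ℝ :=
  ∑ i ∈ I, c i • exitKernel (D i) v

/-- The multiscale charge of the boxes of radii `m i` around `v`, truncated to `E`. -/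
def truncatedCharge (E : Finset Vtx) (I : Finset ι) (c : ι → ℝ) (m : ι → ℤ) (v : Vtx) : Vtx → ℝ :=
  multiscaleCharge I c (fun i => box (m i) v ∩ E) v

lemma multiscaleCharge_box_add (I : Finset ι) (c : ι → ℝ) (m : ι → ℤ) (v h w : Vtx) :
    multiscaleCharge I c (fun i => box (m i) (v + h)) (v + h) (w + h)
      = multiscaleCharge I c (fun i => box (m i) v) v w := by
  simp [multiscaleCharge, Finset.sum_apply, box_add, exitKernel_map_addRight]

/-- The translation by `h` moves `v` deep into `E`: all boxes around `v + h` lie in `E`, while a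
vertex of `E` moved out of `E` by `h` is at least as far from `v` as some half-plane containing `E`,
and so is the complement of each box around `v` cut by `E`. -/
structure IsAdmissibleShift (E : Finset Vtx) (I : Finset ι) (m : ι → ℤ) (h v : Vtx) : Prop where
  box_subset : ∀ i ∈ I, box (m i) (v + h) ⊆ E
  exit : ∃ k, NearSide E v k ∧ ∀ w ∈ E, w + h ∉ E → w ∉ box k v
  cut : ∀ i ∈ I, box (m i) v ⊆ E ∨ NearSide E v (m i)

/-- The part of `E` that stays in `E` under the translation by `h`. -/
def staying (E : Finset Vtx) (h : Vtx) : Finset Vtx := E.filter (· + h ∈ E)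

lemma staying_subset (E : Finset Vtx) (h : Vtx) : staying E h ⊆ E := Finset.filter_subset _ _

lemma map_staying_subset (E : Finset Vtx) (h : Vtx) :
    (staying E h).map (addRightEmbedding h) ⊆ E := by
  intro w hw
  obtain ⟨z, hz, rfl⟩ := Finset.mem_map.1 hw
  exact (Finset.mem_filter.1 hz).2

/-- An uncut box lies in `staying E h`, so by the strong Markov property the error is the exit
kernel of `staying E h`, whose energy is small because that set is left only far away from `v`. -/
lemma IsAdmissibleShift.greenForm_swept_le_of_subset (hv : IsAdmissibleShift E I m h v) {i : ι}
    (hi : i ∈ I) (hbox : box (m i) v ⊆ E) :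
    greenForm E (swept (staying E h) (exitKernel (box (m i) v) v))
      (swept (staying E h) (exitKernel (box (m i) v) v)) ≤ greenBoundConst := by
  have hstay : box (m i) v ⊆ staying E h := fun w hw =>
    Finset.mem_filter.2 ⟨hbox hw, hv.box_subset i hi (by rwa [box_add, add_mem_map_addRight])⟩
  obtain ⟨k, hk, hexit⟩ := hv.exit
  rw [swept_exitKernel hstay]
  exact greenForm_exitKernel_self_le (staying_subset E h) greenBoundConst_nonneg fun w hw hws =>
    greenFn_le_of_notMem_box hk (hexit w hw fun hwh => hws (Finset.mem_filter.2 ⟨hw, hwh⟩))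

lemma NearSide.greenForm_exitKernel_inter_le {k : ℤ} (hE : NearSide E v k) :
    greenForm E (exitKernel (box k v ∩ E) v) (exitKernel (box k v ∩ E) v) ≤ greenBoundConst :=
  greenForm_exitKernel_self_le Finset.inter_subset_right greenBoundConst_nonneg fun _ hw hwb =>
    greenFn_le_of_notMem_box hE fun hwk => hwb (Finset.mem_inter.2 ⟨hwk, hw⟩)

/-- Enlarging `E` to contain the box does not decrease the energy of a nonnegative charge. -/
lemma NearSide.greenForm_exitKernel_box_le {k : ℤ} (hE : NearSide E v k) :
    greenForm E (exitKernel (box k v) v) (exitKernel (box k v) v) ≤ greenBoundConst :=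
  (greenForm_mono Finset.subset_union_left fun w => exitKernel_nonneg _ v w).trans
    (greenForm_exitKernel_self_le Finset.subset_union_right greenBoundConst_nonneg fun _ _ hwk =>
      greenFn_le_of_notMem_box hE.union_box hwk)

/-- The error made in replacing the exit kernel of `B ∩ E` by the exit kernel of `B` minus its
balayage out of `staying E h`. -/
def shiftError (E : Finset Vtx) (h : Vtx) (B : Finset Vtx) (v : Vtx) : Vtx → ℝ :=
  exitKernel (B ∩ E) v - (exitKernel B v - swept (staying E h) (exitKernel B v))

lemma IsAdmissibleShift.greenForm_shiftError_le (hv : IsAdmissibleShift E I m h v) {i : ι}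
    (hi : i ∈ I) :
    greenForm E (shiftError E h (box (m i) v) v) (shiftError E h (box (m i) v) v)
      ≤ 4 * greenBoundConst := by
  unfold shiftError
  by_cases hbox : box (m i) v ⊆ E
  · rw [Finset.inter_eq_left.2 hbox, sub_sub_cancel]
    linarith [hv.greenForm_swept_le_of_subset hi hbox, greenBoundConst_nonneg]
  · have hnear := (hv.cut i hi).resolve_left hbox
    refine apply_sub_sub_le_of_isPosSemidef (isPosSemidef_greenForm E)
      hnear.greenForm_exitKernel_inter_le ?_
    rw [greenForm_sub_swept (staying_subset E h)]
    exact (hnear.mono (staying_subset E h)).greenForm_exitKernel_box_le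

/-- A shift inwards only increases the covariances of the field
`v ↦ ⟨field, truncatedCharge E I c m v⟩`, up to a perturbation of bounded variance. -/
lemma exists_greenForm_add_eq_of_isAdmissibleShift (c : ι → ℝ) {S : Finset Vtx}
    (hS : ∀ v ∈ S, IsAdmissibleShift E I m h v) :
    ∃ y r : Vtx → Vtx → ℝ,
      (∀ u ∈ S, ∀ v ∈ S,
        greenForm E (truncatedCharge E I c m (u + h)) (truncatedCharge E I c m (v + h))
          = greenForm E (y u) (y v) + greenForm E (r u) (r v)) ∧
      ∀ v ∈ S, greenForm E (truncatedCharge E I c m v - y v) (truncatedCharge E I c m v - y v)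
        ≤ (∑ i ∈ I, |c i|) ^ 2 * (4 * greenBoundConst) := by
  set full : Vtx → Vtx → ℝ := fun v => multiscaleCharge I c (fun i => box (m i) v) v
  have htrunc : ∀ v ∈ S, truncatedCharge E I c m (v + h) = full (v + h) := fun v hv =>
    Finset.sum_congr rfl fun i hi => by
      beta_reduce
      rw [Finset.inter_eq_left.2 ((hS v hv).box_subset i hi)]
  have hfull (v : Vtx) : (fun w => full (v + h) (w + h)) = full v :=
    funext fun w => multiscaleCharge_box_add I c m v h w
  refine ⟨fun v => full v - swept (staying E h) (full v),
    fun v => swept ((staying E h).map (addRightEmbedding h)) (full (v + h)),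
    fun u hu v hv => ?_, fun v hv => ?_⟩
  · rw [htrunc u hu, htrunc v hv, greenForm_sub_swept (staying_subset E h),
      greenForm_swept_swept (map_staying_subset E h), greenForm_map_addRight, hfull, hfull]
    ring
  · have herror : truncatedCharge E I c m v - (full v - swept (staying E h) (full v))
        = ∑ i ∈ I, c i • shiftError E h (box (m i) v) v := by
      simp only [truncatedCharge, full, shiftError, multiscaleCharge, map_sum, map_smul,
        ← Finset.sum_sub_distrib, smul_sub]
    rw [herror]
    exact apply_sum_smul_le_of_isPosSemidef (isPosSemidef_greenForm E) c fun i hi =>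
      (hS v hv).greenForm_shiftError_le hi

end CovarianceComparison

noncomputable section LogSumExp

open Real

variable {ι : Type*} [Fintype ι]

/-- The log-partition function `log ∑ i, exp (x i)` of a finite family of energies. -/
def logSumExp (x : ι → ℝ) : ℝ := log (∑ i, exp (x i))

variable [Nonempty ι]

lemma sum_exp_pos (x : ι → ℝ) : 0 < ∑ i, exp (x i) :=
  Finset.sum_pos (fun i _ => exp_pos (x i)) Finset.univ_nonempty

lemma exp_logSumExp (x : ι → ℝ) : exp (logSumExp x) = ∑ i, exp (x i) := exp_log (sum_exp_pos x)

lemma sum_exp_sub (x : ι → ℝ) (c : ℝ) : ∑ i, exp (x i - c) = exp (logSumExp x - c) := by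
  simp only [exp_sub, exp_logSumExp, Finset.sum_div]

lemma sum_exp_sub_logSumExp (x : ι → ℝ) : ∑ i, exp (x i - logSumExp x) = 1 := by
  rw [sum_exp_sub, sub_self, exp_zero]

lemma logSumExp_le_iff {x : ι → ℝ} {c : ℝ} : logSumExp x ≤ c ↔ ∑ i, exp (x i - c) ≤ 1 := by
  rw [sum_exp_sub, exp_le_one_iff, sub_nonpos]

lemma le_logSumExp (x : ι → ℝ) (i : ι) : x i ≤ logSumExp x := by
  rw [← exp_le_exp, exp_logSumExp]
  exact Finset.single_le_sum (f := fun i => exp (x i)) (fun j _ => (exp_pos _).le)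
    (Finset.mem_univ i)

lemma logSumExp_le_add {x y : ι → ℝ} {c : ℝ} (h : ∀ i, x i ≤ y i + c) :
    logSumExp x ≤ logSumExp y + c := by
  rw [logSumExp_le_iff, ← sum_exp_sub_logSumExp y]
  exact Finset.sum_le_sum fun i _ => exp_le_exp.2 (by linarith [h i])

/-- The maximum of the differences of the energies is itself dominated by a log-partition
function. -/
lemma logSumExp_le_add_logSumExp_sub (x y : ι → ℝ) {t : ℝ} (ht : 0 < t) :
    logSumExp x ≤ logSumExp y + logSumExp (fun i => t * (x i - y i)) / t := by
  refine logSumExp_le_add fun i => ?_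
  rw [← sub_le_iff_le_add', le_div_iff₀' ht]
  exact le_logSumExp (fun i => t * (x i - y i)) i

lemma lipschitzWith_logSumExp : LipschitzWith 1 (logSumExp (ι := ι)) := by
  refine LipschitzWith.of_le_add fun x y => logSumExp_le_add fun i => ?_
  linarith [le_abs_self (x i - y i), dist_eq (x i) (y i), dist_le_pi_dist x y i]

lemma convexOn_logSumExp : ConvexOn ℝ Set.univ (logSumExp (ι := ι)) := by
  refine ⟨convex_univ, fun x _ y _ a b ha hb hab => logSumExp_le_iff.2 ?_⟩
  calc ∑ i, exp ((a • x + b • y) i - (a • logSumExp x + b • logSumExp y))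
      ≤ ∑ i, (a * exp (x i - logSumExp x) + b * exp (y i - logSumExp y)) := by
        refine Finset.sum_le_sum fun i _ => ?_
        refine (le_of_eq (congrArg exp ?_)).trans (convexOn_exp.2
          (Set.mem_univ (x i - logSumExp x)) (Set.mem_univ (y i - logSumExp y)) ha hb hab)
        simp only [Pi.add_apply, Pi.smul_apply, smul_eq_mul]
        ring
    _ = 1 := by
        rw [Finset.sum_add_distrib, ← Finset.mul_sum, ← Finset.mul_sum, sum_exp_sub_logSumExp,
          sum_exp_sub_logSumExp, mul_one, mul_one, hab]

lemma contDiff_logSumExp {n : WithTop ℕ∞} : ContDiff ℝ n (logSumExp (ι := ι)) :=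
  ContDiff.log (ContDiff.sum fun i _ => (contDiff_apply ℝ ℝ i).exp) fun x => (sum_exp_pos x).ne'

lemma fderiv_logSumExp (x y : ι → ℝ) :
    fderiv ℝ logSumExp x y = ∑ i, exp (x i - logSumExp x) * y i := by
  have h : HasFDerivAt (fun x : ι → ℝ => ∑ i, exp (x i))
      (∑ i, exp (x i) • ContinuousLinearMap.proj (R := ℝ) (φ := fun _ : ι => ℝ) i) x :=
    HasFDerivAt.fun_sum fun i _ => (hasFDerivAt_apply i x).exp
  change fderiv ℝ (fun x : ι → ℝ => log (∑ i, exp (x i))) x y = _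
  rw [(h.log (sum_exp_pos x).ne').fderiv]
  simp [exp_sub, exp_logSumExp, Finset.mul_sum, div_eq_inv_mul, mul_assoc]

end LogSumExp

section GaussianConcentration

open MeasureTheory ProbabilityTheory Real

variable {E : Type*} [NormedAddCommGroup E] [NormedSpace ℝ E] {f : E → ℝ}

lemma hasDerivAt_comp_rotation (hf : Differentiable ℝ f) (p : E × E) (θ : ℝ) :
    HasDerivAt (fun θ => f (ContinuousLinearMap.rotation θ p).1)
      (fderiv ℝ f (ContinuousLinearMap.rotation θ p).1 (ContinuousLinearMap.rotation θ p).2) θ :=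
  (hf _).hasFDerivAt.comp_hasDerivAt θ
    (((hasDerivAt_cos θ).smul_const p.1).add ((hasDerivAt_sin θ).smul_const p.2))

lemma continuous_fderiv_rotation (hf : ContDiff ℝ 1 f) :
    Continuous fun q : ℝ × E × E => fderiv ℝ f (ContinuousLinearMap.rotation q.1 q.2).1
      (ContinuousLinearMap.rotation q.1 q.2).2 := by
  refine (hf.continuous_fderiv_apply one_ne_zero).comp
    (g := fun p : E × E => fderiv ℝ f p.1 p.2)
    (f := fun q : ℝ × E × E => ContinuousLinearMap.rotation q.1 q.2) ?_
  simp only [ContinuousLinearMap.rotation_apply]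
  fun_prop

lemma enorm_sub_le_lintegral_fderiv_rotation (hf : ContDiff ℝ 1 f) (p : E × E) :
    ‖f p.2 - f p.1‖ₑ ≤ ∫⁻ θ in Set.Ioc 0 (π / 2), ‖fderiv ℝ f
      (ContinuousLinearMap.rotation θ p).1 (ContinuousLinearMap.rotation θ p).2‖ₑ := by
  have hcont := (continuous_fderiv_rotation hf).comp (Continuous.prodMk_left p)
  have hFTC := intervalIntegral.integral_eq_sub_of_hasDerivAt
    (fun θ _ => hasDerivAt_comp_rotation (hf.differentiable one_ne_zero) p θ)
    (hcont.intervalIntegrable 0 (π / 2))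
  rw [intervalIntegral.integral_of_le (by positivity)] at hFTC
  calc ‖f p.2 - f p.1‖ₑ = _ := by
        simp only [ContinuousLinearMap.rotation_apply, cos_pi_div_two, sin_pi_div_two, cos_zero,
          sin_zero, zero_smul, one_smul, zero_add, add_zero] at hFTC ⊢
        rw [← hFTC]
    _ ≤ _ := enorm_integral_le_lintegral_enorm _

variable [MeasurableSpace E] [BorelSpace E] [CompleteSpace E] [SecondCountableTopology E]
  {μ : Measure E} [IsGaussian μ]

/-- The **Maurey–Pisier inequality** in `L¹`. -/
theorem lintegral_enorm_sub_le_lintegral_enorm_fderiv (hμ : μ[id] = 0) (hf : ContDiff ℝ 1 f) :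
    ∫⁻ p, ‖f p.2 - f p.1‖ₑ ∂(μ.prod μ) ≤
      ENNReal.ofReal (π / 2) * ∫⁻ p, ‖fderiv ℝ f p.1 p.2‖ₑ ∂(μ.prod μ) := by
  have hcont : Continuous fun p : E × E => fderiv ℝ f p.1 p.2 :=
    hf.continuous_fderiv_apply one_ne_zero
  calc ∫⁻ p, ‖f p.2 - f p.1‖ₑ ∂(μ.prod μ)
      ≤ ∫⁻ p, (∫⁻ θ in Set.Ioc 0 (π / 2), ‖fderiv ℝ f (ContinuousLinearMap.rotation θ p).1
          (ContinuousLinearMap.rotation θ p).2‖ₑ) ∂(μ.prod μ) :=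
        lintegral_mono fun p => enorm_sub_le_lintegral_fderiv_rotation hf p
    _ = ∫⁻ θ in Set.Ioc 0 (π / 2), (∫⁻ p, ‖fderiv ℝ f (ContinuousLinearMap.rotation θ p).1
          (ContinuousLinearMap.rotation θ p).2‖ₑ ∂(μ.prod μ)) :=
        lintegral_lintegral_swap
          ((continuous_fderiv_rotation hf).comp continuous_swap).enorm.measurable.aemeasurable
    _ = ∫⁻ _ in Set.Ioc 0 (π / 2), (∫⁻ p, ‖fderiv ℝ f p.1 p.2‖ₑ ∂(μ.prod μ)) := by
        congr! 2 with θ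
        rw [← lintegral_map (f := fun p : E × E => ‖fderiv ℝ f p.1 p.2‖ₑ) hcont.enorm.measurable
          (ContinuousLinearMap.rotation θ).continuous.measurable,
          IsGaussian.map_rotation_eq_self hμ θ]
    _ = _ := by
        rw [setLIntegral_const, Real.volume_Ioc, sub_zero, mul_comm]

theorem integral_abs_sub_integral_le_of_fderiv (hμ : μ[id] = 0) (hf : ContDiff ℝ 1 f)
    (hfμ : Integrable f μ) {s : ℝ} (hs : ∀ x, ∫ y, |fderiv ℝ f x y| ∂μ ≤ s) :
    ∫ x, |f x - μ[f]| ∂μ ≤ π / 2 * s := by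
  have hs0 : 0 ≤ s := (integral_nonneg fun y => abs_nonneg _).trans (hs 0)
  have hfderiv (x : E) : ∫⁻ y, ‖fderiv ℝ f x y‖ₑ ∂μ ≤ ENNReal.ofReal s := by
    have hint : Integrable (fderiv ℝ f x) μ :=
      (fderiv ℝ f x).integrable_comp IsGaussian.integrable_id
    rw [← ofReal_integral_norm_eq_lintegral_enorm hint]
    exact ENNReal.ofReal_le_ofReal (hs x)
  have hcenter (x : E) : ‖f x - μ[f]‖ₑ ≤ ∫⁻ y, ‖f y - f x‖ₑ ∂μ := by
    have hsub : ∫ y, (f y - f x) ∂μ = μ[f] - f x := by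
      rw [integral_sub hfμ (integrable_const _), integral_const, probReal_univ, one_smul]
    rw [← enorm_neg, neg_sub, ← hsub]
    exact enorm_integral_le_lintegral_enorm _
  have hint : Integrable (fun x => f x - μ[f]) μ := hfμ.sub (integrable_const _)
  rw [← ENNReal.ofReal_le_ofReal_iff (by positivity)]
  simp_rw [← Real.norm_eq_abs]
  rw [ofReal_integral_norm_eq_lintegral_enorm hint]
  calc ∫⁻ x, ‖f x - μ[f]‖ₑ ∂μ
      ≤ ∫⁻ x, ∫⁻ y, ‖f y - f x‖ₑ ∂μ ∂μ := lintegral_mono hcenter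
    _ = ∫⁻ p, ‖f p.2 - f p.1‖ₑ ∂(μ.prod μ) := by
        rw [lintegral_prod]
        exact (by fun_prop : Continuous fun p : E × E => f p.2 - f p.1).enorm.aemeasurable
    _ ≤ ENNReal.ofReal (π / 2) * ∫⁻ p, ‖fderiv ℝ f p.1 p.2‖ₑ ∂(μ.prod μ) :=
        lintegral_enorm_sub_le_lintegral_enorm_fderiv hμ hf
    _ = ENNReal.ofReal (π / 2) * ∫⁻ x, ∫⁻ y, ‖fderiv ℝ f x y‖ₑ ∂μ ∂μ := by
        rw [lintegral_prod]
        exact (hf.continuous_fderiv_apply one_ne_zero).enorm.aemeasurable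
    _ ≤ ENNReal.ofReal (π / 2) * ENNReal.ofReal s := by
        gcongr
        exact (lintegral_mono hfderiv).trans_eq (by simp)
    _ = ENNReal.ofReal (π / 2 * s) := (ENNReal.ofReal_mul (by positivity)).symm

end GaussianConcentration

section ConvexOrder

open MeasureTheory ProbabilityTheory

variable {E : Type*} [NormedAddCommGroup E] [NormedSpace ℝ E] [MeasurableSpace E] [BorelSpace E]
  [CompleteSpace E] [SecondCountableTopology E]

lemma integral_le_integral_conv_of_convexOn {μ ν : Measure E} [SFinite μ]
    [IsProbabilityMeasure ν] {f : E → ℝ} (hf : ConvexOn ℝ Set.univ f) (hfc : Continuous f)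
    (hνi : Integrable id ν) (hν : ν[id] = 0) (hfμ : Integrable f μ)
    (hfμν : Integrable f (μ ∗ ν)) : ∫ x, f x ∂μ ≤ ∫ x, f x ∂(μ ∗ ν) := by
  have hprod : Integrable (fun p : E × E => f (p.1 + p.2)) (μ.prod ν) :=
    hfμν.comp_measurable measurable_add
  rw [integral_conv hfμν]
  refine integral_mono_ae hfμ hprod.integral_prod_left ?_
  filter_upwards [hprod.prod_right_ae] with x hx
  have hmean : ∫ y, (x + y) ∂ν = x := by
    rw [integral_add (g := fun y => y) (integrable_const x) hνi, integral_const, probReal_univ,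
      one_smul, show ∫ y, y ∂ν = 0 from hν, add_zero]
  calc f x = f (∫ y, (x + y) ∂ν) := by rw [hmean]
    _ ≤ ∫ y, f (x + y) ∂ν := hf.map_integral_le hfc.continuousOn isClosed_univ
        (ae_of_all _ fun _ => Set.mem_univ _) ((integrable_const x).add hνi) hx

variable {Ω : Type*} [MeasurableSpace Ω] {P : Measure Ω}

lemma map_eq_conv_of_variance_eq {X Y R : Ω → E} (hX : HasGaussianLaw X P)
    (hY : HasGaussianLaw Y P) (hR : HasGaussianLaw R P) (hXYR : P[X] = P[Y] + P[R])
    (hvar : ∀ L : StrongDual ℝ E,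
      Var[fun ω => L (X ω); P] = Var[fun ω => L (Y ω); P] + Var[fun ω => L (R ω); P]) :
    P.map X = P.map Y ∗ P.map R := by
  have := hX.isGaussian_map
  have := hY.isGaussian_map
  have := hR.isGaussian_map
  refine Measure.ext_of_charFunDual (funext fun L => ?_)
  rw [charFunDual_conv, hX.charFunDual_map_eq_fun, hY.charFunDual_map_eq_fun,
    hR.charFunDual_map_eq_fun, ← Complex.exp_add, hvar, L.integral_comp_comm hX.integrable,
    L.integral_comp_comm hY.integrable, L.integral_comp_comm hR.integrable, hXYR, map_add]
  push_cast
  ring_nf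

end ConvexOrder

section GaussianLogSumExp

open MeasureTheory ProbabilityTheory Real

variable {Ω : Type*} [MeasurableSpace Ω] {P : Measure Ω} {ι : Type*} [Fintype ι]

lemma integral_abs_le_of_variance_le [IsProbabilityMeasure P] {Z : Ω → ℝ} (hZ : MemLp Z 2 P)
    (hZ0 : P[Z] = 0) {s : ℝ} (hs : 0 ≤ s) (hvar : Var[Z; P] ≤ s ^ 2) : ∫ ω, |Z ω| ∂P ≤ s := by
  have hnonneg : 0 ≤ Var[|Z|; P] := variance_nonneg _ _
  rw [variance_eq_sub hZ.abs, sub_nonneg] at hnonneg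
  rw [variance_of_integral_eq_zero hZ.aemeasurable hZ0] at hvar
  refine (le_abs_self _).trans (abs_le_of_sq_le_sq (hnonneg.trans ?_) hs)
  simpa using hvar

variable {X Y R : ι → Ω → ℝ}

lemma variance_dual_eq_sum_covariance [IsFiniteMeasure P] (hX : ∀ i, MemLp (X i) 2 P)
    (L : StrongDual ℝ (ι → ℝ)) :
    Var[fun ω => L (X · ω); P] =
      ∑ i, ∑ j, L (Pi.single i 1) * L (Pi.single j 1) * cov[X i, X j; P] := by
  have hL (ω : Ω) : L (X · ω) = ∑ i, L (Pi.single i 1) * X i ω := by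
    conv_lhs => rw [pi_eq_sum_univ' (X · ω), map_sum]
    exact Finset.sum_congr rfl fun i _ => by rw [map_smul, smul_eq_mul, mul_comm]
  simp only [hL]
  rw [variance_fun_sum fun i => (hX i).const_mul _]
  simp only [covariance_const_mul_left, covariance_const_mul_right, mul_assoc, mul_left_comm]

lemma integral_eq_zero_of_eval (hX : HasGaussianLaw (fun ω => (X · ω)) P)
    (hX0 : ∀ i, P[X i] = 0) : ∫ ω, (X · ω) ∂P = 0 :=
  funext fun i => (eval_integral (fun i => (hX.eval i).integrable) i).trans (hX0 i)

variable [Nonempty ι]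

lemma integrable_logSumExp [IsFiniteMeasure P] {X : Ω → ι → ℝ} (hX : Integrable X P) :
    Integrable (fun ω => logSumExp (X ω)) P := by
  have hLip : LipschitzWith 1 fun x : ι → ℝ => logSumExp x - logSumExp (0 : ι → ℝ) :=
    LipschitzWith.of_dist_le_mul fun x y => by
      simpa using lipschitzWith_logSumExp.dist_le_mul x y
  have h := memLp_one_iff_integrable.1
    (hLip.comp_memLp (sub_self _) (memLp_one_iff_integrable.2 hX))
  exact (h.add (integrable_const _)).congr (ae_of_all _ fun ω => sub_add_cancel _ _)

/-- Jensen's inequality for an independent Gaussian vector with the added covariance. -/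
theorem integral_logSumExp_le_of_covariance_eq (hX : HasGaussianLaw (fun ω => (X · ω)) P)
    (hY : HasGaussianLaw (fun ω => (Y · ω)) P) (hR : HasGaussianLaw (fun ω => (R · ω)) P)
    (hX0 : ∀ i, P[X i] = 0) (hY0 : ∀ i, P[Y i] = 0) (hR0 : ∀ i, P[R i] = 0)
    (hcov : ∀ i j, cov[X i, X j; P] = cov[Y i, Y j; P] + cov[R i, R j; P]) :
    ∫ ω, logSumExp (Y · ω) ∂P ≤ ∫ ω, logSumExp (X · ω) ∂P := by
  have := hX.isProbabilityMeasure
  have := hY.isGaussian_map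
  have := hR.isGaussian_map
  have hmap {Z : ι → Ω → ℝ} (hZ : HasGaussianLaw (fun ω => (Z · ω)) P) :
      ∫ ω, logSumExp (Z · ω) ∂P = ∫ x, logSumExp x ∂(P.map fun ω => (Z · ω)) :=
    (integral_map hZ.aemeasurable
      lipschitzWith_logSumExp.continuous.aestronglyMeasurable).symm
  have hlaw := map_eq_conv_of_variance_eq hX hY hR
    (by rw [integral_eq_zero_of_eval hX hX0, integral_eq_zero_of_eval hY hY0,
      integral_eq_zero_of_eval hR hR0, add_zero]) fun L => by
      simp only [variance_dual_eq_sum_covariance fun i => (hX.eval i).memLp_two,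
        variance_dual_eq_sum_covariance fun i => (hY.eval i).memLp_two,
        variance_dual_eq_sum_covariance fun i => (hR.eval i).memLp_two, hcov, mul_add,
        Finset.sum_add_distrib]
  rw [hmap hX, hmap hY, hlaw]
  refine integral_le_integral_conv_of_convexOn convexOn_logSumExp
    lipschitzWith_logSumExp.continuous IsGaussian.integrable_id ?_
    (integrable_logSumExp IsGaussian.integrable_id) (integrable_logSumExp IsGaussian.integrable_id)
  rw [integral_map hR.aemeasurable (by fun_prop)]
  exact integral_eq_zero_of_eval hR hR0

lemma integral_abs_fderiv_logSumExp_le (hX : HasGaussianLaw (fun ω => (X · ω)) P)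
    (hX0 : ∀ i, P[X i] = 0) {s : ℝ} (hs : 0 ≤ s) (hvar : ∀ i, Var[X i; P] ≤ s ^ 2) (x : ι → ℝ) :
    ∫ ω, |fderiv ℝ logSumExp x (X · ω)| ∂P ≤ s := by
  have := hX.isProbabilityMeasure
  have hint (i : ι) : Integrable (fun ω => exp (x i - logSumExp x) * |X i ω|) P :=
    (hX.eval i).integrable.abs.const_mul _
  calc ∫ ω, |fderiv ℝ logSumExp x (X · ω)| ∂P
      ≤ ∫ ω, ∑ i, exp (x i - logSumExp x) * |X i ω| ∂P := by
        refine integral_mono_of_nonneg (ae_of_all _ fun ω => abs_nonneg _)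
          (integrable_finsetSum _ fun i _ => hint i) (ae_of_all _ fun ω => ?_)
        simp only [fderiv_logSumExp]
        refine (Finset.abs_sum_le_sum_abs _ _).trans_eq ?_
        simp only [abs_mul, abs_exp]
    _ = ∑ i, exp (x i - logSumExp x) * ∫ ω, |X i ω| ∂P := by
        rw [integral_finsetSum _ fun i _ => hint i]
        simp only [integral_const_mul]
    _ ≤ ∑ i, exp (x i - logSumExp x) * s := by
        gcongr with i
        exact integral_abs_le_of_variance_le (hX.eval i).memLp_two (hX0 i) hs (hvar i)
    _ = s := by rw [← Finset.sum_mul, sum_exp_sub_logSumExp, one_mul]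

theorem integral_abs_logSumExp_sub_integral_le (hX : HasGaussianLaw (fun ω => (X · ω)) P)
    (hX0 : ∀ i, P[X i] = 0) {s : ℝ} (hs : 0 ≤ s) (hvar : ∀ i, Var[X i; P] ≤ s ^ 2) :
    ∫ ω, |logSumExp (X · ω) - ∫ ω', logSumExp (X · ω') ∂P| ∂P ≤ π / 2 * s := by
  have := hX.isGaussian_map
  have hcont : Continuous (logSumExp (ι := ι)) := lipschitzWith_logSumExp.continuous
  have hmean : (P.map fun ω => (X · ω))[id] = 0 := by
    rw [integral_map hX.aemeasurable (by fun_prop)]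
    exact integral_eq_zero_of_eval hX hX0
  have hconc := integral_abs_sub_integral_le_of_fderiv hmean contDiff_logSumExp
    (integrable_logSumExp IsGaussian.integrable_id) fun x => by
      rw [integral_map hX.aemeasurable (by fun_prop)]
      exact integral_abs_fderiv_logSumExp_le hX hX0 hs hvar x
  rwa [integral_map hX.aemeasurable hcont.aestronglyMeasurable,
    integral_map hX.aemeasurable (by fun_prop)] at hconc

lemma integral_logSumExp_mul_le [IsProbabilityMeasure P] {c : NNReal}
    (hX : ∀ i, HasSubgaussianMGF (X i) c P) (t : ℝ) :
    ∫ ω, logSumExp (fun i => t * X i ω) ∂P ≤ log (Fintype.card ι) + c * t ^ 2 / 2 := by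
  have hcard : (0 : ℝ) < Fintype.card ι := by exact_mod_cast Fintype.card_pos
  have hint : Integrable (fun ω => logSumExp fun i => t * X i ω) P :=
    integrable_logSumExp (Integrable.of_eval fun i => (hX i).integrable.const_mul t)
  have hsum : Integrable (fun ω => ∑ i, exp (t * X i ω)) P :=
    integrable_finsetSum _ fun i _ => (hX i).integrable_exp_mul t
  rw [← exp_le_exp, exp_add, exp_log hcard]
  calc exp (∫ ω, logSumExp (fun i => t * X i ω) ∂P)
      ≤ ∫ ω, exp (logSumExp fun i => t * X i ω) ∂P :=
        convexOn_exp.map_integral_le continuous_exp.continuousOn isClosed_univ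
          (ae_of_all _ fun _ => Set.mem_univ _) hint (by simpa [Function.comp_def, exp_logSumExp])
    _ = ∑ i, mgf (X i) P t := by
        simp only [exp_logSumExp]
        exact integral_finsetSum _ fun i _ => (hX i).integrable_exp_mul t
    _ ≤ ∑ _ : ι, exp (c * t ^ 2 / 2) := Finset.sum_le_sum fun i _ => (hX i).mgf_le t
    _ = Fintype.card ι * exp (c * t ^ 2 / 2) := by simp

theorem integral_logSumExp_le_of_hasSubgaussianMGF_sub [IsProbabilityMeasure P] {c : NNReal}
    (hX : ∀ i, Integrable (X i) P) (hY : ∀ i, Integrable (Y i) P)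
    (hXY : ∀ i, HasSubgaussianMGF (fun ω => X i ω - Y i ω) c P) {t : ℝ} (ht : 0 < t) :
    ∫ ω, logSumExp (X · ω) ∂P ≤
      ∫ ω, logSumExp (Y · ω) ∂P + (log (Fintype.card ι) + c * t ^ 2 / 2) / t := by
  have hintY : Integrable (fun ω => logSumExp (Y · ω)) P :=
    integrable_logSumExp (Integrable.of_eval hY)
  have hintXY : Integrable (fun ω => logSumExp fun i => t * (X i ω - Y i ω)) P :=
    integrable_logSumExp (Integrable.of_eval fun i => (hXY i).integrable.const_mul t)
  calc ∫ ω, logSumExp (X · ω) ∂P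
      ≤ ∫ ω, (logSumExp (Y · ω) + logSumExp (fun i => t * (X i ω - Y i ω)) / t) ∂P :=
        integral_mono (integrable_logSumExp (Integrable.of_eval hX))
          (hintY.add (hintXY.div_const t)) fun ω => logSumExp_le_add_logSumExp_sub _ _ ht
    _ = ∫ ω, logSumExp (Y · ω) ∂P + (∫ ω, logSumExp (fun i => t * (X i ω - Y i ω)) ∂P) / t := by
        rw [integral_add hintY (hintXY.div_const t), integral_div]
    _ ≤ _ := by
        gcongr
        exact integral_logSumExp_mul_le hXY t

end GaussianLogSumExp

noncomputable section FieldGeometry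

variable {N : ℕ}

lemma mem_intr {B : Finset Vtx} {w : Vtx} : w ∈ intr B ↔ w ∈ B ∧
    (w.1 + 1, w.2) ∈ B ∧ (w.1 - 1, w.2) ∈ B ∧ (w.1, w.2 + 1) ∈ B ∧ (w.1, w.2 - 1) ∈ B := by
  rw [intr, bdry, Finset.mem_sdiff, Finset.mem_filter]
  tauto

lemma intr_mono {A B : Finset Vtx} (h : A ⊆ B) : intr A ⊆ intr B := fun w hw => by
  rw [mem_intr] at hw ⊢
  exact hw.imp (@h _) (.imp (@h _) (.imp (@h _) (.imp (@h _) (@h _))))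

lemma mem_VN {w : Vtx} : w ∈ VN N ↔ (0 ≤ w.1 ∧ w.1 ≤ N) ∧ 0 ≤ w.2 ∧ w.2 ≤ N := by
  rw [VN, Finset.mem_Icc, Prod.le_def, Prod.le_def]
  tauto

lemma mem_intr_VN {w : Vtx} :
    w ∈ intr (VN N) ↔ (1 ≤ w.1 ∧ w.1 + 1 ≤ N) ∧ 1 ≤ w.2 ∧ w.2 + 1 ≤ N := by
  simp only [mem_intr, mem_VN]
  constructor <;> intro h <;> refine ⟨?_, ?_⟩ <;> omega

lemma nbhd_subset_VN {v : Vtx} (hv : v ∈ VN N) (lam : ℝ) : nbhd N lam v ⊆ VN N := by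
  unfold nbhd
  split_ifs
  · exact subset_rfl
  · exact Finset.singleton_subset_iff.2 hv
  · exact Finset.filter_subset _ _

/-- The radius of the open box `[v]_λ°` around `v`. -/
def scaleRadius (N : ℕ) (lam : ℝ) : ℤ := ⌊(N : ℝ) ^ (1 - lam) / 2⌋

lemma abs_intCast_sub_le_iff {x y : ℤ} {R : ℝ} : |(x : ℝ) - y| ≤ R ↔ |x - y| ≤ ⌊R⌋ := by
  rw [Int.le_floor, Int.cast_abs, Int.cast_sub]

lemma intr_nbhd {lam : ℝ} (hlam : lam ≠ 0) (v : Vtx) :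
    intr (nbhd N lam v) = box (scaleRadius N lam) v ∩ intr (VN N) := by
  ext w
  rw [Finset.mem_inter, mem_box, mem_intr]
  by_cases hone : lam = 1
  · have hradius : scaleRadius N lam = 0 := by norm_num [scaleRadius, hone]
    simp only [nbhd, if_neg hlam, if_pos hone, Finset.mem_singleton, Prod.ext_iff, hradius]
    omega
  · simp only [nbhd, if_neg hlam, if_neg hone, Finset.mem_filter, abs_intCast_sub_le_iff]
    simp only [abs_le, mem_intr, scaleRadius]
    generalize ⌊(N : ℝ) ^ (1 - lam) / 2⌋ = m
    constructor
    · rintro ⟨⟨h, _⟩, ⟨h₁, _⟩, ⟨h₂, _⟩, ⟨h₃, _⟩, h₄, _⟩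
      refine ⟨?_, h, h₁, h₂, h₃, h₄⟩
      omega
    · rintro ⟨_, h, h₁, h₂, h₃, h₄⟩
      refine ⟨⟨h, ?_⟩, ⟨h₁, ?_⟩, ⟨h₂, ?_⟩, ⟨h₃, ?_⟩, h₄, ?_⟩ <;> omega

end FieldGeometry

noncomputable section FreeField

open MeasureTheory ProbabilityTheory

/-- The pairing `∑_{v ∈ L} a_v ω_v` of a charge `a` with a field configuration `ω`. Linear
observables of the field on `L` are all of this form. -/
def fieldPairing (L : Finset Vtx) : (Vtx → ℝ) →ₗ[ℝ] FieldSp → ℝ where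
  toFun a ω := ∑ v ∈ L, a v * ω v
  map_add' a b := by
    ext ω
    simp only [Pi.add_apply, add_mul, Finset.sum_add_distrib]
  map_smul' t a := by
    ext ω
    simp only [Pi.smul_apply, smul_eq_mul, mul_assoc, Finset.mul_sum, RingHom.id_apply]

lemma fieldPairing_apply (L : Finset Vtx) (a : Vtx → ℝ) (ω : FieldSp) :
    fieldPairing L a ω = ∑ v ∈ L, a v * ω v := rfl

@[fun_prop]
lemma measurable_fieldPairing (L : Finset Vtx) (a : Vtx → ℝ) : Measurable (fieldPairing L a) := by
  simp only [funext (fieldPairing_apply L a)]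
  fun_prop

lemma fieldPairing_single {L : Finset Vtx} {v : Vtx} (hv : v ∈ L) :
    fieldPairing L (Pi.single v 1) = fun ω => ω v := by
  ext ω
  simp only [fieldPairing_apply, Pi.single_apply, ite_mul, one_mul, zero_mul,
    Finset.sum_ite_eq', if_pos hv]

lemma measurable_fieldPairing_of_eq_zero {L D : Finset Vtx} {a : Vtx → ℝ}
    (ha : ∀ w ∈ D, a w = 0) :
    Measurable[MeasurableSpace.comap (L \ D).restrict inferInstance] (fieldPairing L a) := by
  have hfac : fieldPairing L a
      = (fun x : ↥(L \ D) → ℝ => ∑ w : ↥(L \ D), a w * x w) ∘ (L \ D).restrict := by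
    ext ω
    simp only [fieldPairing_apply, Function.comp_apply, Finset.restrict_def]
    rw [Finset.sum_coe_sort (L \ D) fun w => a w * ω w]
    refine (Finset.sum_subset Finset.sdiff_subset fun w hw hwD => ?_).symm
    rw [ha w (by simpa [hw] using hwD), zero_mul]
  rw [hfac]
  exact Measurable.comp (by fun_prop) (comap_measurable _)

namespace IsGFF

variable {N : ℕ} {P : Measure FieldSp} {ι κ : Type*} [Finite ι] [Finite κ]

lemma map_fieldPairing (h : IsGFF N P) (a : Vtx → ℝ) : P.map (fieldPairing (VN N) a)
    = gaussianReal 0 (greenForm (intr (VN N)) a a).toNNReal := by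
  obtain ⟨-, G, hG, hlaw⟩ := h
  obtain rfl := eq_greenFn hG.isGreenOn
  have hsum : greenForm (intr (VN N)) a a
      = ∑ v ∈ VN N, ∑ w ∈ VN N, a v * a w * greenFn (intr (VN N)) v w := by
    rw [greenForm_apply]
    refine Finset.sum_subset_zero_on_sdiff Finset.sdiff_subset (fun v hv => ?_) fun v _ => ?_
    · simp only [greenFn_of_notMem_left (Finset.mem_sdiff.1 hv).2, mul_zero, Finset.sum_const_zero]
    · refine Finset.sum_subset_zero_on_sdiff Finset.sdiff_subset (fun w hw => ?_) fun _ _ => rfl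
      rw [greenFn_of_notMem_right _ (Finset.mem_sdiff.1 hw).2, mul_zero]
  rw [hsum]
  exact hlaw a

lemma hasGaussianLaw (h : IsGFF N P) (a : ι → Vtx → ℝ) :
    HasGaussianLaw (fun ω i => fieldPairing (VN N) (a i) ω) P where
  isGaussian_map := by
    have := Fintype.ofFinite ι
    refine isGaussian_of_map_eq_gaussianReal fun ℓ => ?_
    have hℓ : ℓ ∘ (fun ω i => fieldPairing (VN N) (a i) ω)
        = fieldPairing (VN N) (∑ i, ℓ (Pi.single i 1) • a i) := by
      ext ω
      rw [Function.comp_apply, pi_eq_sum_univ' (fun i => fieldPairing (VN N) (a i) ω)]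
      simp only [map_sum, map_smul, Finset.sum_apply, Pi.smul_apply, smul_eq_mul, mul_comm]
    rw [Measure.map_map (by fun_prop) (by fun_prop), hℓ, h.map_fieldPairing]
    exact ⟨_, _, rfl⟩

lemma memLp_fieldPairing (h : IsGFF N P) (a : Vtx → ℝ) : MemLp (fieldPairing (VN N) a) 2 P :=
  ((h.hasGaussianLaw fun _ : Unit => a).eval ()).memLp_two

lemma integral_fieldPairing (h : IsGFF N P) (a : Vtx → ℝ) :
    ∫ ω, fieldPairing (VN N) a ω ∂P = 0 := by
  have hmap := integral_map (measurable_fieldPairing (VN N) a).aemeasurable (μ := P)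
    aestronglyMeasurable_id
  rw [h.map_fieldPairing] at hmap
  exact hmap.symm.trans integral_id_gaussianReal

lemma variance_fieldPairing (h : IsGFF N P) (a : Vtx → ℝ) :
    Var[fieldPairing (VN N) a; P] = greenForm (intr (VN N)) a a := by
  rw [← variance_id_map (by fun_prop), h.map_fieldPairing, variance_id_gaussianReal,
    Real.coe_toNNReal _ ((isPosSemidef_greenForm _).nonneg a)]

lemma covariance_fieldPairing (h : IsGFF N P) (a b : Vtx → ℝ) :
    cov[fieldPairing (VN N) a, fieldPairing (VN N) b; P] = greenForm (intr (VN N)) a b := by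
  have := h.1
  have hadd := variance_add (h.memLp_fieldPairing a) (h.memLp_fieldPairing b)
  rw [← map_add, h.variance_fieldPairing, h.variance_fieldPairing, h.variance_fieldPairing,
    map_add, map_add, LinearMap.add_apply, LinearMap.add_apply, greenForm_comm _ b a] at hadd
  linarith

lemma hasSubgaussianMGF_fieldPairing (h : IsGFF N P) {a : Vtx → ℝ} {C : NNReal}
    (ha : greenForm (intr (VN N)) a a ≤ C) :
    HasSubgaussianMGF (fieldPairing (VN N) a) C P where
  integrable_exp_mul t := by
    have hexp := integrable_exp_mul_gaussianReal (μ := 0)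
      (v := (greenForm (intr (VN N)) a a).toNNReal) t
    rw [← h.map_fieldPairing] at hexp
    exact (integrable_map_measure (g := fun x => Real.exp (t * x)) (by fun_prop)
      (by fun_prop)).1 hexp
  mgf_le t := by
    rw [mgf_gaussianReal (h.map_fieldPairing a),
      Real.coe_toNNReal _ ((isPosSemidef_greenForm _).nonneg a), zero_mul, zero_add]
    gcongr

lemma indepFun_fieldPairing (h : IsGFF N P) {a : ι → Vtx → ℝ} {b : κ → Vtx → ℝ}
    (hab : ∀ i j, greenForm (intr (VN N)) (a i) (b j) = 0) :
    IndepFun (fun ω i => fieldPairing (VN N) (a i) ω) (fun ω j => fieldPairing (VN N) (b j) ω)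
      P := by
  let split : (ι ⊕ κ → ℝ) →L[ℝ] (ι → ℝ) × (κ → ℝ) :=
    (ContinuousLinearMap.pi fun i => ContinuousLinearMap.proj (Sum.inl i)).prod
      (ContinuousLinearMap.pi fun j => ContinuousLinearMap.proj (Sum.inr j))
  have hpair : HasGaussianLaw (fun ω => (fun i => fieldPairing (VN N) (a i) ω,
      fun j => fieldPairing (VN N) (b j) ω)) P :=
    (h.hasGaussianLaw (Sum.elim a b)).map_of_measurable split (by fun_prop)
  exact hpair.indepFun_of_covariance_eval fun i j =>
    (h.covariance_fieldPairing (a i) (b j)).trans (hab i j)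

lemma indep_comap_fieldPairing_sub_swept (h : IsGFF N P) {D : Finset Vtx}
    (hD : D ⊆ intr (VN N)) (a : Vtx → ℝ) :
    Indep (MeasurableSpace.comap (fieldPairing (VN N) (a - swept D a)) inferInstance)
      (MeasurableSpace.comap (VN N \ D).restrict inferInstance) P := by
  have hind : IndepFun (fun ω (_ : Unit) => fieldPairing (VN N) (a - swept D a) ω)
      (fun ω (w : ↥(VN N \ D)) => fieldPairing (VN N) (Pi.single (w : Vtx) 1) ω) P := by
    refine h.indepFun_fieldPairing (a := fun _ : Unit => a - swept D a)
      (b := fun w : ↥(VN N \ D) => Pi.single (w : Vtx) 1) fun _ w => ?_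
    have hfix : swept D (Pi.single (w : Vtx) 1) = Pi.single (w : Vtx) 1 := by
      rw [swept_single, exitKernel_of_notMem (Finset.mem_sdiff.1 w.2).2]
    rw [map_sub, LinearMap.sub_apply, greenForm_swept_left hD, sub_sub_cancel, ← hfix,
      greenForm_swept_right_self]
  have hres : (fun ω (w : ↥(VN N \ D)) => fieldPairing (VN N) (Pi.single (w : Vtx) 1) ω)
      = (VN N \ D).restrict := by
    ext ω w
    rw [fieldPairing_single (Finset.mem_sdiff.1 w.2).1, Finset.restrict_def]
  rw [hres] at hind
  exact hind.comp (measurable_pi_apply ()) measurable_id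

/-- The Markov property of the free field. -/
theorem condExp_fieldPairing (h : IsGFF N P) {D : Finset Vtx} (hD : D ⊆ intr (VN N))
    (a : Vtx → ℝ) :
    P[fieldPairing (VN N) a | MeasurableSpace.comap (VN N \ D).restrict inferInstance]
      =ᵐ[P] fieldPairing (VN N) (swept D a) := by
  have := h.1
  have hm : MeasurableSpace.comap (VN N \ D).restrict inferInstance
      ≤ (inferInstance : MeasurableSpace FieldSp) := (Finset.measurable_restrict _).comap_le
  have hint (b : Vtx → ℝ) : Integrable (fieldPairing (VN N) b) P :=
    (h.memLp_fieldPairing b).integrable one_le_two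
  have hmeas := (measurable_fieldPairing_of_eq_zero (L := VN N) (a := swept D a)
    fun w (hw : w ∈ D) => swept_of_mem hw a).stronglyMeasurable
  have hinn : P[fieldPairing (VN N) (a - swept D a) |
      MeasurableSpace.comap (VN N \ D).restrict inferInstance] =ᵐ[P] fun _ => 0 := by
    simpa only [h.integral_fieldPairing] using condExp_indep_eq
      (measurable_fieldPairing _ _).comap_le hm (comap_measurable _).stronglyMeasurable
      (h.indep_comap_fieldPairing_sub_swept hD a)
  have hsum := condExp_add (hint (a - swept D a)) (hint (swept D a))
    (MeasurableSpace.comap (VN N \ D).restrict inferInstance)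
  rw [← map_add, sub_add_cancel, condExp_of_stronglyMeasurable hm hmeas (hint _)] at hsum
  filter_upwards [hsum, hinn] with ω hsum hinn
  rw [hsum, Pi.add_apply, hinn, zero_add]

end IsGFF

lemma scaleAlg_eq_comap (N : ℕ) (lam : ℝ) (v : Vtx) : scaleAlg N lam v
    = MeasurableSpace.comap (VN N \ intr (nbhd N lam v)).restrict inferInstance := by
  simp only [scaleAlg, MeasurableSpace.pi, MeasurableSpace.comap_iSup,
    MeasurableSpace.comap_comp, iSup_subtype, Finset.mem_sdiff]
  rfl

lemma IsGFF.phiScale_ae_eq {N : ℕ} {P : Measure FieldSp} (h : IsGFF N P) (lam : ℝ) {v : Vtx}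
    (hv : v ∈ VN N) : phiScale N P v lam
      =ᵐ[P] fieldPairing (VN N) (exitKernel (intr (nbhd N lam v)) v) := by
  rw [phiScale, scaleAlg_eq_comap, ← fieldPairing_single hv, ← swept_single]
  exact h.condExp_fieldPairing (intr_mono (nbhd_subset_VN hv lam)) _

lemma IsGFF.phiScale_zero_ae_eq {N : ℕ} {P : Measure FieldSp} (h : IsGFF N P) {v : Vtx}
    (hv : v ∈ VN N) : phiScale N P v 0 =ᵐ[P] 0 := by
  have := h.1
  have hphi := h.phiScale_ae_eq 0 hv
  rw [nbhd, if_pos rfl] at hphi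
  have hvar : Var[fieldPairing (VN N) (exitKernel (intr (VN N)) v); P] = 0 := by
    rw [h.variance_fieldPairing, greenForm_exitKernel subset_rfl, sub_self]
  have hconst := (evariance_eq_zero_iff
    (measurable_fieldPairing _ _).aemeasurable).1 (by
      rw [← (h.memLp_fieldPairing _).ofReal_variance_eq, hvar, ENNReal.ofReal_zero])
  rw [h.integral_fieldPairing] at hconst
  exact hphi.trans hconst

end FreeField

noncomputable section ScaleFamily

open MeasureTheory

/-- The field `v ↦ ∑ i, c i • E[φ_v | φ outside the box of radius m i around v]`, as a linear
functional of the free field `φ` on `V_N`. -/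
def multiscaleField {ι : Type*} (N : ℕ) (I : Finset ι) (c : ι → ℝ) (m : ι → ℤ) (v : Vtx) :
    FieldSp → ℝ :=
  fieldPairing (VN N) (truncatedCharge (intr (VN N)) I c m v)

lemma multiscaleField_apply {ι : Type*} (N : ℕ) (I : Finset ι) (c : ι → ℝ) (m : ι → ℤ) (v : Vtx)
    (ω : FieldSp) : multiscaleField N I c m v ω
      = ∑ i ∈ I, c i * fieldPairing (VN N) (exitKernel (box (m i) v ∩ intr (VN N)) v) ω := by
  simp only [multiscaleField, truncatedCharge, multiscaleCharge, map_sum, map_smul,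
    Finset.sum_apply, Pi.smul_apply, smul_eq_mul]

lemma sum_Icc_mul_sub (s f : ℕ → ℝ) (n : ℕ) : ∑ i ∈ Finset.Icc 1 n, s i * (f i - f (i - 1))
    = ∑ i ∈ Finset.Icc 1 n, (s i - s (i + 1)) * f i + s (n + 1) * f n - s 1 * f 0 := by
  induction n with
  | zero => simp
  | succ n ih =>
    rw [Finset.sum_Icc_succ_top (by lia), Finset.sum_Icc_succ_top (by lia), ih,
      Nat.add_sub_cancel]
    ring

namespace ScaleParams

variable {M : ℕ} {sigv lamv : ℕ → ℝ}

lemma lam_one_pos (hp : ScaleParams M sigv lamv) : 0 < lamv 1 := by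
  obtain ⟨hM, -, hzero, -, hlt⟩ := hp
  exact hzero ▸ hlt 0 hM

lemma lam_one_le (hp : ScaleParams M sigv lamv) {i : ℕ} (hi : i ∈ Finset.Icc 1 M) :
    lamv 1 ≤ lamv i := by
  obtain ⟨h1, hM⟩ := Finset.mem_Icc.1 hi
  induction i, h1 using Nat.le_induction with
  | base => exact le_rfl
  | succ n hn ih =>
    exact (ih (Finset.mem_Icc.2 ⟨hn, by lia⟩) (by lia)).trans (hp.2.2.2.2 n hM).le

end ScaleParams

/-- The weight of `φ_v(λ_i)` in `ψ_v`, after summation by parts. -/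
def scaleWeight (M : ℕ) (sigv : ℕ → ℝ) (i : ℕ) : ℝ := sigv i - if i < M then sigv (i + 1) else 0

theorem IsGFF.psiFld_ae_eq {N M : ℕ} {sigv lamv : ℕ → ℝ} {P : Measure FieldSp} (h : IsGFF N P)
    (hp : ScaleParams M sigv lamv) {v : Vtx} (hv : v ∈ VN N) :
    psiFld N M sigv lamv P v =ᵐ[P] multiscaleField N (Finset.Icc 1 M) (scaleWeight M sigv)
      (fun i => scaleRadius N (lamv i)) v := by
  have hphi : ∀ᵐ ω ∂P, ∀ i ∈ Finset.Icc 1 M, phiScale N P v (lamv i) ω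
      = fieldPairing (VN N) (exitKernel (box (scaleRadius N (lamv i)) v ∩ intr (VN N)) v) ω := by
    refine (eventually_all_finset _).2 fun i hi => ?_
    rw [← intr_nbhd (hp.lam_one_pos.trans_le (hp.lam_one_le hi)).ne' v]
    exact h.phiScale_ae_eq (lamv i) hv
  filter_upwards [hphi, h.phiScale_zero_ae_eq hv] with ω hphi hzero
  have hparts := sum_Icc_mul_sub (fun i => if i ≤ M then sigv i else 0)
    (fun i => phiScale N P v (lamv i) ω) M
  simp only [hp.2.2.1, hzero, Pi.zero_apply, mul_zero, sub_zero, Nat.not_succ_le_self, if_false,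
    zero_mul, add_zero] at hparts
  simp only [multiscaleField_apply]
  refine Eq.trans (Finset.sum_congr rfl fun i hi => ?_)
    (hparts.trans (Finset.sum_congr rfl fun i hi => ?_))
  · rw [if_pos (Finset.mem_Icc.1 hi).2]
  · rw [hphi i hi, if_pos (Finset.mem_Icc.1 hi).2, scaleWeight]
    rfl

end ScaleFamily

noncomputable section ReplicaAverage

open Real

variable {α : Type*} {A V : Finset α} {s : ℕ} {F : (Fin s → α) → ℝ}

/-- The average of `F` over `s` independent samples from the Gibbs measure on `V` with energies
`x`. -/
def replicaAvg (V : Finset α) (x : α → ℝ) (s : ℕ) (F : (Fin s → α) → ℝ) : ℝ :=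
  ∑ vv ∈ Fintype.piFinset fun _ : Fin s => V, (∏ i, exp (x (vv i)) / ∑ v ∈ V, exp (x v)) * F vv

lemma replicaAvg_congr {x y : α → ℝ} (h : ∀ v ∈ V, x v = y v) (F : (Fin s → α) → ℝ) :
    replicaAvg V x s F = replicaAvg V y s F := by
  refine Finset.sum_congr rfl fun vv hvv => ?_
  rw [Finset.sum_congr rfl fun v hv => congrArg exp (h v hv), Finset.prod_congr rfl fun i _ => by
    rw [h _ (Fintype.mem_piFinset.1 hvv i)]]

lemma abs_sum_prod_mul_le {T : Finset (Fin s → α)} {p : α → ℝ} (hp : ∀ v, 0 ≤ p v)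
    (hF : ∀ vv, |F vv| ≤ 1) : |∑ vv ∈ T, (∏ i, p (vv i)) * F vv| ≤ ∑ vv ∈ T, ∏ i, p (vv i) := by
  refine (Finset.abs_sum_le_sum_abs _ _).trans (Finset.sum_le_sum fun vv _ => ?_)
  rw [abs_mul, abs_of_nonneg (Finset.prod_nonneg fun i _ => hp _)]
  exact mul_le_of_le_one_right (Finset.prod_nonneg fun i _ => hp _) (hF vv)

lemma abs_replicaAvg_le_one (hV : V.Nonempty) (x : α → ℝ) (hF : ∀ vv, |F vv| ≤ 1) :
    |replicaAvg V x s F| ≤ 1 := by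
  have hZ : ∑ v ∈ V, exp (x v) ≠ 0 := (Finset.sum_pos (fun v _ => exp_pos (x v)) hV).ne'
  have hp (v : α) : 0 ≤ exp (x v) / ∑ v ∈ V, exp (x v) := by positivity
  refine (abs_sum_prod_mul_le hp hF).trans_eq ?_
  rw [Finset.sum_prod_piFinset V fun _ v => exp (x v) / ∑ v ∈ V, exp (x v)]
  simp only [← Finset.sum_div, div_self hZ, Finset.prod_const_one]

lemma sum_piFinset_prod_mul_eq (V : Finset α) (hA : A.Nonempty) (x : α → ℝ)
    (F : (Fin s → α) → ℝ) :
    ∑ vv ∈ Fintype.piFinset fun _ : Fin s => A, (∏ i, exp (x (vv i)) / ∑ v ∈ V, exp (x v)) * F vv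
      = ((∑ v ∈ A, exp (x v)) / ∑ v ∈ V, exp (x v)) ^ s * replicaAvg A x s F := by
  have hZ : ∑ v ∈ A, exp (x v) ≠ 0 := (Finset.sum_pos (fun v _ => exp_pos (x v)) hA).ne'
  rw [replicaAvg, Finset.mul_sum]
  refine Finset.sum_congr rfl fun vv _ => ?_
  rw [← mul_assoc, ← Fin.prod_const, ← Finset.prod_mul_distrib]
  exact congrArg (· * F vv) (Finset.prod_congr rfl fun i _ => by
    rw [mul_comm, div_mul_div_cancel₀ hZ])

lemma sum_piFinset_sdiff_prod_eq [DecidableEq α] (hAV : A ⊆ V) (hV : V.Nonempty) (x : α → ℝ) :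
    ∑ vv ∈ Fintype.piFinset (fun _ : Fin s => V) \ Fintype.piFinset fun _ => A,
      ∏ i, exp (x (vv i)) / ∑ v ∈ V, exp (x v)
      = 1 - ((∑ v ∈ A, exp (x v)) / ∑ v ∈ V, exp (x v)) ^ s := by
  have hZ : ∑ v ∈ V, exp (x v) ≠ 0 := (Finset.sum_pos (fun v _ => exp_pos (x v)) hV).ne'
  rw [eq_sub_iff_add_eq, Finset.sum_div, ← Fin.prod_const,
    ← Finset.sum_prod_piFinset A fun _ v => exp (x v) / ∑ v ∈ V, exp (x v),
    Finset.sum_sdiff (Fintype.piFinset_subset _ _ fun _ => hAV),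
    Finset.sum_prod_piFinset V fun _ v => exp (x v) / ∑ v ∈ V, exp (x v), ← Finset.sum_div,
    div_self hZ, Finset.prod_const_one]

lemma abs_replicaAvg_sub_replicaAvg_le [DecidableEq α] (hAV : A ⊆ V) (hA : A.Nonempty) (x : α → ℝ)
    (hF : ∀ vv, |F vv| ≤ 1) : |replicaAvg V x s F - replicaAvg A x s F|
      ≤ 2 * s * ((∑ v ∈ V \ A, exp (x v)) / ∑ v ∈ V, exp (x v)) := by
  have hZV : 0 < ∑ v ∈ V, exp (x v) := Finset.sum_pos (fun v _ => exp_pos (x v)) (hA.mono hAV)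
  let p v := exp (x v) / ∑ v ∈ V, exp (x v)
  have hp v : 0 ≤ p v := by positivity
  let outside := Fintype.piFinset (fun _ : Fin s => V) \ Fintype.piFinset fun _ => A
  set q := (∑ v ∈ A, exp (x v)) / ∑ v ∈ V, exp (x v) with hq
  have hq0 : 0 ≤ q := by positivity
  have hout : (∑ v ∈ V \ A, exp (x v)) / ∑ v ∈ V, exp (x v) = 1 - q := by
    rw [hq, eq_sub_iff_add_eq, ← add_div, Finset.sum_sdiff hAV, div_self hZV.ne']
  have hq1 : q ≤ 1 := by
    rw [← sub_nonneg, ← hout]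
    positivity
  have hbernoulli : 1 - q ^ s ≤ s * (1 - q) := by
    have := one_add_mul_le_pow (a := q - 1) (by linarith) s
    rw [add_sub_cancel] at this
    linarith
  have hpow : q ^ s ≤ 1 := pow_le_one₀ hq0 hq1
  calc |replicaAvg V x s F - replicaAvg A x s F|
      = |(∑ vv ∈ outside, (∏ i, p (vv i)) * F vv) - (1 - q ^ s) * replicaAvg A x s F| := by
        rw [one_sub_mul, ← sum_piFinset_prod_mul_eq V hA, ← sub_add, sub_add_eq_add_sub,
          Finset.sum_sdiff (Fintype.piFinset_subset _ _ fun _ => hAV)]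
        rfl
    _ ≤ |∑ vv ∈ outside, (∏ i, p (vv i)) * F vv| + |(1 - q ^ s) * replicaAvg A x s F| :=
        abs_sub _ _
    _ ≤ (1 - q ^ s) + (1 - q ^ s) := by
        gcongr
        · exact (abs_sum_prod_mul_le hp hF).trans_eq
            (sum_piFinset_sdiff_prod_eq hAV (hA.mono hAV) x)
        · rw [abs_mul, abs_of_nonneg (sub_nonneg.2 hpow)]
          exact mul_le_of_le_one_right (sub_nonneg.2 hpow) (abs_replicaAvg_le_one hA x hF)
    _ ≤ _ := by
        rw [hout]
        linarith

/-- The right-hand side is bounded by the number of pieces, so it can be integrated without any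
control on the tails of the ratios. -/
lemma sum_sdiff_div_le_sum_min [DecidableEq α] {κ : Type*} {I : Finset κ} {S : κ → Finset α}
    (hA : A.Nonempty) (hAV : A ⊆ V) (hS : V \ A ⊆ I.biUnion S) (x : α → ℝ) :
    (∑ v ∈ V \ A, exp (x v)) / ∑ v ∈ V, exp (x v)
      ≤ ∑ b ∈ I, min 1 ((∑ v ∈ S b, exp (x v)) / ∑ v ∈ A, exp (x v)) := by
  have hZA : 0 < ∑ v ∈ A, exp (x v) := Finset.sum_pos (fun v _ => exp_pos (x v)) hA
  have hnonneg : ∀ b ∈ I, 0 ≤ min 1 ((∑ v ∈ S b, exp (x v)) / ∑ v ∈ A, exp (x v)) :=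
    fun b _ => by positivity
  by_cases! hlarge : ∃ b ∈ I, 1 ≤ (∑ v ∈ S b, exp (x v)) / ∑ v ∈ A, exp (x v)
  · obtain ⟨b, hb, hone⟩ := hlarge
    calc (∑ v ∈ V \ A, exp (x v)) / ∑ v ∈ V, exp (x v) ≤ 1 :=
          div_le_one_of_le₀ (Finset.sum_le_sum_of_subset_of_nonneg Finset.sdiff_subset
            fun v _ _ => (exp_pos (x v)).le) (by positivity)
      _ = min 1 ((∑ v ∈ S b, exp (x v)) / ∑ v ∈ A, exp (x v)) := (min_eq_left hone).symm
      _ ≤ _ := Finset.single_le_sum hnonneg hb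
  · rw [Finset.sum_congr rfl fun b hb => min_eq_right (hlarge b hb).le, ← Finset.sum_div]
    refine div_le_div₀ (by positivity) ?_ hZA
      (Finset.sum_le_sum_of_subset_of_nonneg hAV fun v _ _ => (exp_pos (x v)).le)
    calc ∑ v ∈ V \ A, exp (x v) ≤ ∑ v ∈ I.biUnion S, exp (x v) :=
          Finset.sum_le_sum_of_subset_of_nonneg hS fun v _ _ => (exp_pos (x v)).le
      _ ≤ ∑ b ∈ I, ∑ v ∈ S b, exp (x v) := by
        rw [← Finset.sup_eq_biUnion]
        refine Finset.apply_sup_le_sum (f := fun T => ∑ v ∈ T, exp (x v)) Finset.sum_empty ?_ I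
        intro T U
        rw [← Finset.sum_union_inter]
        exact le_add_of_nonneg_right (Finset.sum_nonneg fun v _ => (exp_pos (x v)).le)

open MeasureTheory

variable {Ω : Type*} [MeasurableSpace Ω] {P : Measure Ω} [IsFiniteMeasure P] {X : α → Ω → ℝ}

lemma integrable_replicaAvg (hV : V.Nonempty) (hX : ∀ v, Measurable (X v)) (hF : ∀ vv, |F vv| ≤ 1) :
    Integrable (fun ω => replicaAvg V (X · ω) s F) P := by
  have hmeas : Measurable fun ω => replicaAvg V (X · ω) s F := by
    unfold replicaAvg
    fun_prop
  exact Integrable.of_bound hmeas.aestronglyMeasurable 1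
    (ae_of_all _ fun ω => abs_replicaAvg_le_one hV _ hF)

lemma integrable_min_one_div (S A : Finset α) (hX : ∀ v, Measurable (X v)) :
    Integrable (fun ω => min 1 ((∑ v ∈ S, exp (X v ω)) / ∑ v ∈ A, exp (X v ω))) P := by
  have hmeas : Measurable fun ω => min 1 ((∑ v ∈ S, exp (X v ω)) / ∑ v ∈ A, exp (X v ω)) := by
    fun_prop
  refine Integrable.of_bound hmeas.aestronglyMeasurable 1 (ae_of_all _ fun ω => ?_)
  rw [norm_of_nonneg (by positivity)]
  exact min_le_left _ _

theorem abs_integral_replicaAvg_sub_le [DecidableEq α] {κ : Type*} {I : Finset κ} {S : κ → Finset α}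
    (hA : A.Nonempty) (hAV : A ⊆ V) (hS : V \ A ⊆ I.biUnion S) (hX : ∀ v, Measurable (X v))
    (hF : ∀ vv, |F vv| ≤ 1) {B : ℝ}
    (hB : ∀ b ∈ I, ∫ ω, min 1 ((∑ v ∈ S b, exp (X v ω)) / ∑ v ∈ A, exp (X v ω)) ∂P ≤ B) :
    |∫ ω, replicaAvg V (X · ω) s F ∂P - ∫ ω, replicaAvg A (X · ω) s F ∂P|
      ≤ 2 * s * (I.card * B) := by
  have hint := (integrable_replicaAvg (P := P) (hA.mono hAV) hX hF).sub
    (integrable_replicaAvg hA hX hF)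
  have hmin (b : κ) := integrable_min_one_div (P := P) (S b) A hX
  rw [← integral_sub (integrable_replicaAvg (hA.mono hAV) hX hF) (integrable_replicaAvg hA hX hF)]
  calc |∫ ω, (replicaAvg V (X · ω) s F - replicaAvg A (X · ω) s F) ∂P|
      ≤ ∫ ω, |replicaAvg V (X · ω) s F - replicaAvg A (X · ω) s F| ∂P :=
        abs_integral_le_integral_abs
    _ ≤ ∫ ω, 2 * s * ∑ b ∈ I, min 1 ((∑ v ∈ S b, exp (X v ω)) / ∑ v ∈ A, exp (X v ω)) ∂P := by
        refine integral_mono hint.abs ((integrable_finsetSum _ fun b _ => hmin b).const_mul _)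
          fun ω => (abs_replicaAvg_sub_replicaAvg_le hAV hA _ hF).trans ?_
        gcongr
        exact sum_sdiff_div_le_sum_min hA hAV hS _
    _ ≤ 2 * s * (I.card * B) := by
        rw [integral_const_mul, integral_finsetSum _ fun b _ => hmin b, ← nsmul_eq_mul I.card]
        gcongr
        exact Finset.sum_le_card_nsmul _ _ _ hB

end ReplicaAverage

section ShiftAveraging

open Real

variable {α κ : Type*} [DecidableEq α] [AddGroup α] {J : Finset κ} {h : κ → α}
  {S A : Finset α} {w : ℕ}

lemma sum_sum_add_le_mul_sum {f : α → ℝ} (hf : ∀ a, 0 ≤ f a)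
    (hmaps : ∀ k ∈ J, ∀ v ∈ S, v + h k ∈ A)
    (hmult : ∀ a ∈ A, (J.filter fun k => a - h k ∈ S).card ≤ w) :
    ∑ k ∈ J, ∑ v ∈ S, f (v + h k) ≤ w * ∑ a ∈ A, f a := by
  have hreindex : ∀ k ∈ J, ∑ v ∈ S, f (v + h k) = ∑ a ∈ A, if a - h k ∈ S then f a else 0 := by
    intro k hk
    rw [← Finset.sum_filter]
    refine Finset.sum_bij' (fun v _ => v + h k) (fun a _ => a - h k) ?_ ?_ ?_ ?_ ?_
    · exact fun v hv => Finset.mem_filter.2 ⟨hmaps k hk v hv, by rwa [add_sub_cancel_right]⟩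
    · exact fun a ha => (Finset.mem_filter.1 ha).2
    · exact fun v _ => add_sub_cancel_right _ _
    · exact fun a _ => sub_add_cancel _ _
    · exact fun v _ => rfl
  rw [Finset.sum_congr rfl hreindex, Finset.sum_comm, Finset.mul_sum]
  refine Finset.sum_le_sum fun a ha => ?_
  rw [← Finset.sum_filter, Finset.sum_const, nsmul_eq_mul]
  exact mul_le_mul_of_nonneg_right (by exact_mod_cast hmult a ha) (hf a)

/-- The shifted sums `Z k` satisfy `∑ k, Z k ≤ w Z`, where `Z` is the sum over `A`; concavity of
the logarithm turns this into a bound for the average of `log (Z k)`. -/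
lemma average_logSumExp_add_le [Nonempty S] [Nonempty A] (hJ : J.Nonempty)
    (hmaps : ∀ k ∈ J, ∀ v ∈ S, v + h k ∈ A)
    (hmult : ∀ a ∈ A, (J.filter fun k => a - h k ∈ S).card ≤ w) (x : α → ℝ) :
    (∑ k ∈ J, logSumExp fun v : S => x (v + h k)) / J.card + log (J.card / w)
      ≤ logSumExp fun a : A => x a := by
  have hJ0 : (0 : ℝ) < J.card := by exact_mod_cast hJ.card_pos
  have hsum : ∑ k ∈ J, ∑ v : S, exp (x (v + h k)) ≤ w * ∑ a : A, exp (x a) := by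
    rw [Finset.sum_coe_sort A fun a => exp (x a),
      Finset.sum_congr rfl fun k _ => Finset.sum_coe_sort S fun v => exp (x (v + h k))]
    exact sum_sum_add_le_mul_sum (f := fun a => exp (x a)) (fun a => (exp_pos _).le) hmaps hmult
  have hpos : 0 < ∑ k ∈ J, ∑ v : S, exp (x (v + h k)) :=
    Finset.sum_pos (fun k _ => sum_exp_pos fun v : S => x (v + h k)) hJ
  have hA : 0 < ∑ a : A, exp (x a) := sum_exp_pos _
  have hw : (0 : ℝ) < w := pos_of_mul_pos_left (hpos.trans_le hsum) hA.le
  have hJensen := strictConcaveOn_log_Ioi.concaveOn.le_map_sum (t := J)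
    (w := fun _ => (J.card : ℝ)⁻¹) (p := fun k => ∑ v : S, exp (x (v + h k)))
    (fun k _ => by positivity) (by rw [Finset.sum_const, nsmul_eq_mul, mul_inv_cancel₀ hJ0.ne'])
    fun k _ => sum_exp_pos fun v : S => x (v + h k)
  rw [← Finset.smul_sum, ← Finset.smul_sum, smul_eq_mul, smul_eq_mul, ← div_eq_inv_mul,
    log_mul (inv_ne_zero hJ0.ne') hpos.ne', log_inv] at hJensen
  have hlog := log_le_log hpos hsum
  rw [log_mul hw.ne' hA.ne'] at hlog
  rw [log_div hJ0.ne' hw.ne']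
  unfold logSumExp
  linarith

end ShiftAveraging

section ExpectationOfRatio

open MeasureTheory ProbabilityTheory Real

lemma min_one_exp_sub_le {a R : ℝ} (ha : 0 < a) (hR : 0 ≤ R) :
    min 1 (exp (R - a)) ≤ exp (-a / 2) + 2 * R / a := by
  rcases le_total R (a / 2) with hsmall | hlarge
  · have : exp (R - a) ≤ exp (-a / 2) := exp_le_exp.2 (by linarith)
    exact (min_le_right _ _).trans (this.trans (le_add_of_nonneg_right (by positivity)))
  · have : 1 ≤ 2 * R / a := by rw [one_le_div ha]; linarith
    exact (min_le_left _ _).trans (this.trans (le_add_of_nonneg_left (exp_pos _).le))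

variable {Ω : Type*} [MeasurableSpace Ω] {P : Measure Ω} [IsProbabilityMeasure P]

lemma integral_min_one_exp_le {X R : Ω → ℝ} {a : ℝ} (ha : 0 < a) (hR : Integrable R P)
    (hR0 : ∀ ω, 0 ≤ R ω) (hXR : ∀ ω, X ω ≤ R ω - a) :
    ∫ ω, min 1 (exp (X ω)) ∂P ≤ exp (-a / 2) + 2 * (∫ ω, R ω ∂P) / a := by
  have hRi : Integrable (fun ω => 2 * R ω / a) P := (hR.const_mul 2).div_const a
  calc ∫ ω, min 1 (exp (X ω)) ∂P ≤ ∫ ω, (exp (-a / 2) + 2 * R ω / a) ∂P :=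
        integral_mono_of_nonneg (ae_of_all _ fun ω => by positivity)
          ((integrable_const _).add hRi) (ae_of_all _ fun ω =>
            (min_le_min_left 1 (exp_le_exp.2 (hXR ω))).trans (min_one_exp_sub_le ha (hR0 ω)))
    _ = exp (-a / 2) + 2 * (∫ ω, R ω ∂P) / a := by
        rw [integral_add (integrable_const _) hRi, integral_const, probReal_univ, one_smul,
          integral_div, integral_const_mul]

theorem integral_min_one_exp_sub_le {κ : Type*} {J : Finset κ} {Y U : Ω → ℝ} {Z : κ → Ω → ℝ}
    {D ε a : ℝ} (hJ : J.Nonempty) (hY : Integrable Y P) (hZ : ∀ k ∈ J, Integrable (Z k) P)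
    (hYD : ∫ ω, |Y ω - P[Y]| ∂P ≤ D) (hZD : ∀ k ∈ J, ∫ ω, |Z k ω - P[Z k]| ∂P ≤ D)
    (hYZ : ∀ k ∈ J, P[Y] ≤ P[Z k] + ε) (ha : 0 < a)
    (hU : ∀ ω, (∑ k ∈ J, Z k ω) / J.card + (a + ε) ≤ U ω) :
    ∫ ω, min 1 (exp (Y ω - U ω)) ∂P ≤ exp (-a / 2) + 4 * D / a := by
  have hJ0 : (0 : ℝ) < J.card := by exact_mod_cast hJ.card_pos
  let R ω := |Y ω - P[Y]| + (∑ k ∈ J, |Z k ω - P[Z k]|) / J.card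
  have hYU (ω : Ω) : Y ω - U ω ≤ R ω - a := by
    have hmean : ∑ k ∈ J, (P[Y] - ε - Z k ω) ≤ ∑ k ∈ J, |Z k ω - P[Z k]| :=
      Finset.sum_le_sum fun k hk => by linarith [hYZ k hk, neg_le_abs (Z k ω - P[Z k])]
    rw [Finset.sum_sub_distrib, Finset.sum_const, nsmul_eq_mul,
      ← div_le_div_iff_of_pos_right hJ0, sub_div, mul_div_cancel_left₀ _ hJ0.ne'] at hmean
    linarith [le_abs_self (Y ω - P[Y]), hU ω]
  have hYi : Integrable (fun ω => |Y ω - P[Y]|) P := (hY.sub (integrable_const _)).abs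
  have hZi : ∀ k ∈ J, Integrable (fun ω => |Z k ω - P[Z k]|) P :=
    fun k hk => ((hZ k hk).sub (integrable_const _)).abs
  have hZJi := (integrable_finsetSum J hZi).div_const (J.card : ℝ)
  have hR : ∫ ω, R ω ∂P ≤ 2 * D := by
    have hsum : ∑ k ∈ J, ∫ ω, |Z k ω - P[Z k]| ∂P ≤ J.card * D :=
      (Finset.sum_le_card_nsmul _ _ _ hZD).trans_eq (nsmul_eq_mul _ _)
    rw [integral_add hYi hZJi, integral_div, integral_finsetSum _ hZi, two_mul]
    exact add_le_add hYD ((div_le_iff₀' hJ0).2 hsum)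
  calc ∫ ω, min 1 (exp (Y ω - U ω)) ∂P ≤ exp (-a / 2) + 2 * (∫ ω, R ω ∂P) / a :=
        integral_min_one_exp_le ha (hYi.add hZJi) (fun ω => by positivity) hYU
    _ ≤ exp (-a / 2) + 2 * (2 * D) / a := by gcongr
    _ = exp (-a / 2) + 4 * D / a := by ring

end ExpectationOfRatio

noncomputable section CornerStrips

variable {N : ℕ} {ρ : ℝ} {w K k m : ℤ} {b : Bool × Bool} {v : Vtx}

/-- The distance of the coordinate `x` to the side of `{0,…,N}` selected by `b`: the side `0` if `b`
holds, the side `N` otherwise. -/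
def sideDist (N : ℕ) (b : Bool) (x : ℤ) : ℤ := if b then x else N - x

/-- The sign of the direction pointing away from the side selected by `b`. -/
def sideSign (b : Bool) : ℤ := if b then 1 else -1

/-- The vertices in the quadrant of `V_N` at the corner `b` that are within distance `w` of a side
through this corner. -/
def cornerStrip (N : ℕ) (w : ℤ) (b : Bool × Bool) : Finset Vtx :=
  (VN N).filter fun v => 2 * sideDist N b.1 v.1 ≤ N ∧ 2 * sideDist N b.2 v.2 ≤ N ∧
    (sideDist N b.1 v.1 ≤ w ∨ sideDist N b.2 v.2 ≤ w)

/-- The vector of `ℓ^∞`-length `k` pointing diagonally away from the corner `b`. -/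
def inwardShift (b : Bool × Bool) (k : ℤ) : Vtx := (sideSign b.1 * k, sideSign b.2 * k)

lemma sideDist_sub_sideDist (N : ℕ) (b : Bool) (x y : ℤ) :
    sideDist N b x - sideDist N b y = (x - y) * sideSign b := by
  cases b
  · simp [sideDist, sideSign]
  · simp [sideDist, sideSign]

lemma sideDist_add_sideSign_mul (N : ℕ) (b : Bool) (x k : ℤ) :
    sideDist N b (x + sideSign b * k) = sideDist N b x + k := by
  rw [← sub_eq_iff_eq_add', sideDist_sub_sideDist]
  cases b <;> simp [sideSign]

lemma sideDist_mem_Icc_iff {b : Bool} {x l u : ℤ} (h : l + u = N) :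
    (l ≤ sideDist N b x ∧ sideDist N b x ≤ u) ↔ l ≤ x ∧ x ≤ u := by
  cases b
  · simp only [sideDist, Bool.false_eq_true, if_false]
    omega
  · simp only [sideDist, if_true]

lemma mem_VN_iff_sideDist (b : Bool × Bool) : v ∈ VN N ↔
    (0 ≤ sideDist N b.1 v.1 ∧ sideDist N b.1 v.1 ≤ N) ∧
      0 ≤ sideDist N b.2 v.2 ∧ sideDist N b.2 v.2 ≤ N := by
  rw [mem_VN, sideDist_mem_Icc_iff (zero_add _), sideDist_mem_Icc_iff (zero_add _)]

lemma mem_intr_VN_iff_sideDist (b : Bool × Bool) : v ∈ intr (VN N) ↔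
    (1 ≤ sideDist N b.1 v.1 ∧ sideDist N b.1 v.1 ≤ N - 1) ∧
      1 ≤ sideDist N b.2 v.2 ∧ sideDist N b.2 v.2 ≤ N - 1 := by
  rw [mem_intr_VN, sideDist_mem_Icc_iff (add_sub_cancel _ _),
    sideDist_mem_Icc_iff (add_sub_cancel _ _), le_sub_iff_add_le, le_sub_iff_add_le]

lemma mem_box_iff_sideDist (N : ℕ) (b : Bool × Bool) {z : Vtx} : z ∈ box m v ↔
    (sideDist N b.1 v.1 - m < sideDist N b.1 z.1 ∧ sideDist N b.1 z.1 < sideDist N b.1 v.1 + m) ∧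
      sideDist N b.2 v.2 - m < sideDist N b.2 z.2 ∧
        sideDist N b.2 z.2 < sideDist N b.2 v.2 + m := by
  have hcoord (b : Bool) (x y : ℤ) : (y - m < x ∧ x < y + m) ↔
      sideDist N b y - m < sideDist N b x ∧ sideDist N b x < sideDist N b y + m := by
    cases b
    · simp only [sideDist, Bool.false_eq_true, if_false]
      omega
    · simp only [sideDist, if_true]
  rw [mem_box, ← hcoord, ← hcoord]

lemma mem_cornerStrip : v ∈ cornerStrip N w b ↔
    ((0 ≤ sideDist N b.1 v.1 ∧ 2 * sideDist N b.1 v.1 ≤ N) ∧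
      0 ≤ sideDist N b.2 v.2 ∧ 2 * sideDist N b.2 v.2 ≤ N) ∧
    (sideDist N b.1 v.1 ≤ w ∨ sideDist N b.2 v.2 ≤ w) := by
  rw [cornerStrip, Finset.mem_filter, mem_VN_iff_sideDist b]
  omega

lemma cornerStrip_subset_VN (N : ℕ) (w : ℤ) (b : Bool × Bool) : cornerStrip N w b ⊆ VN N :=
  Finset.filter_subset _ _

lemma cornerStrip_nonempty (N : ℕ) (hw : 0 ≤ w) (b : Bool × Bool) :
    (cornerStrip N w b).Nonempty := by
  have hcorner (b : Bool) : sideDist N b (if b then 0 else N) = 0 := by cases b <;> simp [sideDist]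
  refine ⟨(if b.1 then 0 else N, if b.2 then 0 else N), mem_cornerStrip.2 ?_⟩
  simp only [hcorner]
  omega

lemma card_cornerStrip_le (N : ℕ) (w : ℤ) (b : Bool × Bool) :
    (cornerStrip N w b).card ≤ (N + 1) ^ 2 := by
  refine (Finset.card_le_card (cornerStrip_subset_VN N w b)).trans_eq ?_
  rw [VN, ← Finset.Icc_product_Icc, Finset.card_product, Int.card_Icc, sq]
  simp

lemma nearSide_of_sideDist_fst_le {b : Bool} (hm : 0 ≤ m) (h : sideDist N b v.1 ≤ m) :
    NearSide (intr (VN N)) v m := by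
  refine ⟨hm, (sideSign b, 0), by cases b <;> simp [sideSign, unitVecs], fun w hw => ?_⟩
  have hw1 := ((mem_intr_VN_iff_sideDist (b, b)).1 hw).1.1
  rw [mul_zero, add_zero, ← sideDist_sub_sideDist N]
  lia

lemma nearSide_of_sideDist_snd_le {b : Bool} (hm : 0 ≤ m) (h : sideDist N b v.2 ≤ m) :
    NearSide (intr (VN N)) v m := by
  refine ⟨hm, (0, sideSign b), by cases b <;> simp [sideSign, unitVecs], fun w hw => ?_⟩
  have hw2 := ((mem_intr_VN_iff_sideDist (b, b)).1 hw).2.1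
  rw [mul_zero, zero_add, ← sideDist_sub_sideDist N]
  lia

lemma box_subset_intr_VN (b : Bool × Bool) (h₁ : m ≤ sideDist N b.1 v.1)
    (h₁' : sideDist N b.1 v.1 + m ≤ N) (h₂ : m ≤ sideDist N b.2 v.2)
    (h₂' : sideDist N b.2 v.2 + m ≤ N) : box m v ⊆ intr (VN N) := by
  intro z hz
  rw [mem_box_iff_sideDist N b] at hz
  rw [mem_intr_VN_iff_sideDist b]
  lia

theorem isAdmissibleShift_of_mem_cornerStrip {ι : Type*} {I : Finset ι} {m : ι → ℤ} (hw : 0 ≤ w)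
    (hwK : w ≤ K) (hKN : 8 * K ≤ N) (hm : ∀ i ∈ I, 0 ≤ m i ∧ m i ≤ K) (hk : K < k)
    (hk' : k ≤ 2 * K) (hv : v ∈ cornerStrip N w b) :
    IsAdmissibleShift (intr (VN N)) I m (inwardShift b k) v := by
  obtain ⟨⟨⟨h1, h1N⟩, h2, h2N⟩, hstrip⟩ := mem_cornerStrip.1 hv
  refine ⟨fun i hi => ?_, ⟨w, ?_, fun z hz hzk hzbox => hzk ?_⟩, fun i hi => ?_⟩
  · have hmi := hm i hi
    apply box_subset_intr_VN b <;>
      simp only [inwardShift, Prod.fst_add, Prod.snd_add, sideDist_add_sideSign_mul] <;> lia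
  · exact hstrip.elim (nearSide_of_sideDist_fst_le hw) (nearSide_of_sideDist_snd_le hw)
  · rw [mem_intr_VN_iff_sideDist b] at hz ⊢
    rw [mem_box_iff_sideDist N b] at hzbox
    simp only [inwardShift, Prod.fst_add, Prod.snd_add, sideDist_add_sideSign_mul]
    lia
  · have hmi := hm i hi
    rcases lt_or_ge (sideDist N b.1 v.1) (m i) with hlt1 | hge1
    · exact .inr (nearSide_of_sideDist_fst_le hmi.1 hlt1.le)
    rcases lt_or_ge (sideDist N b.2 v.2) (m i) with hlt2 | hge2
    · exact .inr (nearSide_of_sideDist_snd_le hmi.1 hlt2.le)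
    exact .inl (box_subset_intr_VN b hge1 (by lia) hge2 (by lia))

lemma mem_AN_of_le (hK : 0 ≤ K) (hρ : (N : ℝ) ^ (1 - ρ) ≤ K)
    (h₁ : K ≤ sideDist N b.1 v.1 ∧ sideDist N b.1 v.1 ≤ N - K)
    (h₂ : K ≤ sideDist N b.2 v.2 ∧ sideDist N b.2 v.2 ≤ N - K) : v ∈ AN N ρ := by
  rw [sideDist_mem_Icc_iff (add_sub_cancel K N)] at h₁ h₂
  refine Finset.mem_filter.2 ⟨mem_VN.2 (by lia), fun z hz => hρ.trans (Real.le_sqrt_of_sq_le ?_)⟩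
  have hfar : K ≤ |v.1 - z.1| ∨ K ≤ |v.2 - z.2| := by
    rw [mem_VN] at hz
    rw [le_abs, le_abs]
    lia
  have hsq {x : ℤ} (hx : K ≤ |x|) : (K : ℝ) ^ 2 ≤ (x : ℝ) ^ 2 := by
    exact_mod_cast sq_le_sq.2 ((abs_of_nonneg hK).trans_le hx)
  rcases hfar with hfar | hfar
  · have := (hsq hfar).trans (le_add_of_nonneg_right (sq_nonneg ((v.2 : ℝ) - z.2)))
    exact_mod_cast this
  · have := (hsq hfar).trans (le_add_of_nonneg_left (sq_nonneg ((v.1 : ℝ) - z.1)))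
    exact_mod_cast this

lemma add_inwardShift_mem_AN (hρ : (N : ℝ) ^ (1 - ρ) ≤ K) (hK : 0 ≤ K) (hKN : 8 * K ≤ N)
    (hk : K < k) (hk' : k ≤ 2 * K) (hv : v ∈ cornerStrip N w b) :
    v + inwardShift b k ∈ AN N ρ := by
  obtain ⟨⟨⟨h1, h1N⟩, h2, h2N⟩, -⟩ := mem_cornerStrip.1 hv
  apply mem_AN_of_le (b := b) hK hρ <;>
    simp only [inwardShift, Prod.fst_add, Prod.snd_add, sideDist_add_sideSign_mul] <;> lia

lemma VN_sdiff_AN_subset (hw : (N : ℝ) ^ (1 - ρ) < w + 1) :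
    VN N \ AN N ρ ⊆ Finset.univ.biUnion (cornerStrip N w) := by
  intro v hv
  obtain ⟨hvN, hvA⟩ := Finset.mem_sdiff.1 hv
  simp only [AN, Finset.mem_filter, hvN, true_and, not_forall, not_le] at hvA
  obtain ⟨z, hz, hdist⟩ := hvA
  have hclose {x y : ℝ} {a : ℤ} (hxy : Real.sqrt (x ^ 2 + y ^ 2) < (N : ℝ) ^ (1 - ρ))
      (ha : |(a : ℝ)| ≤ Real.sqrt (x ^ 2 + y ^ 2)) : |a| ≤ w := by
    have : ((|a| : ℤ) : ℝ) < (w + 1 : ℤ) := by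
      push_cast
      exact ha.trans_lt (hxy.trans hw)
    exact Int.lt_add_one_iff.1 (by exact_mod_cast this)
  have h1 := hclose (a := v.1 - z.1) hdist (by
    push_cast
    exact Real.abs_le_sqrt (le_add_of_nonneg_right (sq_nonneg _)))
  have h2 := hclose (a := v.2 - z.2) hdist (by
    push_cast
    exact Real.abs_le_sqrt (le_add_of_nonneg_left (sq_nonneg _)))
  rw [mem_VN] at hz hvN
  rw [abs_le] at h1 h2
  refine Finset.mem_biUnion.2 ⟨(decide (2 * v.1 ≤ N), decide (2 * v.2 ≤ N)), Finset.mem_univ _,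
    mem_cornerStrip.2 ?_⟩
  simp only [sideDist, decide_eq_true_eq]
  split_ifs <;> omega

lemma card_filter_sub_inwardShift_le (hw : 0 ≤ w) (J : Finset ℤ) (b : Bool × Bool) (a : Vtx) :
    (J.filter fun k => a - inwardShift b k ∈ cornerStrip N w b).card ≤ (2 * (w + 1)).toNat := by
  have hsub : (J.filter fun k => a - inwardShift b k ∈ cornerStrip N w b) ⊆
      Finset.Icc (sideDist N b.1 a.1 - w) (sideDist N b.1 a.1) ∪
        Finset.Icc (sideDist N b.2 a.2 - w) (sideDist N b.2 a.2) := by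
    intro k hk
    have hmem := mem_cornerStrip.1 (Finset.mem_filter.1 hk).2
    have hdist (b : Bool) (x : ℤ) : sideDist N b (x - sideSign b * k) = sideDist N b x - k := by
      rw [sub_eq_add_neg, ← mul_neg, sideDist_add_sideSign_mul, sub_eq_add_neg]
    simp only [inwardShift, Prod.fst_sub, Prod.snd_sub, hdist] at hmem
    rw [Finset.mem_union, Finset.mem_Icc, Finset.mem_Icc]
    omega
  refine (Finset.card_le_card hsub).trans ((Finset.card_union_le _ _).trans ?_)
  rw [Int.card_Icc, Int.card_Icc]
  omega

end CornerStrips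

noncomputable section StripRatio

open MeasureTheory ProbabilityTheory Real

variable {N : ℕ} {P : Measure FieldSp} {ι : Type*} {I : Finset ι} {c : ι → ℝ} {m : ι → ℤ}

/-- A bound on the variance of the perturbation that an admissible shift makes to the multiscale
field with weights `c`. -/
def shiftErrorVariance (I : Finset ι) (c : ι → ℝ) : NNReal :=
  ⟨(∑ i ∈ I, |c i|) ^ 2 * (4 * greenBoundConst), by have := greenBoundConst_nonneg; positivity⟩

lemma IsGFF.hasGaussianLaw_multiscaleField (h : IsGFF N P) (I : Finset ι) (c : ι → ℝ) (m : ι → ℤ)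
    {κ : Type*} [Finite κ] (p : κ → Vtx) :
    HasGaussianLaw (fun ω k => multiscaleField N I c m (p k) ω) P :=
  h.hasGaussianLaw fun k => truncatedCharge (intr (VN N)) I c m (p k)

lemma IsGFF.integral_logSumExp_multiscaleField_le (h : IsGFF N P) {S : Finset Vtx} [Nonempty S]
    {k : Vtx} (hS : ∀ v ∈ S, IsAdmissibleShift (intr (VN N)) I m k v) (c : ι → ℝ) {t : ℝ}
    (ht : 0 < t) :
    ∫ ω, logSumExp (fun v : S => multiscaleField N I c m v ω) ∂P
      ≤ ∫ ω, logSumExp (fun v : S => multiscaleField N I c m (v + k) ω) ∂P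
        + (log S.card + shiftErrorVariance I c * t ^ 2 / 2) / t := by
  have := h.1
  obtain ⟨y, r, hcov, herror⟩ := exists_greenForm_add_eq_of_isAdmissibleShift c hS
  have hint (a : Vtx → ℝ) : Integrable (fieldPairing (VN N) a) P :=
    (h.memLp_fieldPairing a).integrable one_le_two
  have hperturb := integral_logSumExp_le_of_hasSubgaussianMGF_sub
    (X := fun v : S => multiscaleField N I c m v) (Y := fun v : S => fieldPairing (VN N) (y v))
    (c := shiftErrorVariance I c) (P := P) (fun v => hint _) (fun v => hint _) (fun v => by
      have hsub := h.hasSubgaussianMGF_fieldPairing (C := shiftErrorVariance I c) (herror v v.2)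
      rwa [map_sub] at hsub) ht
  have hincrease := integral_logSumExp_le_of_covariance_eq
    (X := fun v : S => multiscaleField N I c m (v + k))
    (Y := fun v : S => fieldPairing (VN N) (y v)) (R := fun v : S => fieldPairing (VN N) (r v))
    (P := P)
    (h.hasGaussianLaw_multiscaleField I c m _) (h.hasGaussianLaw _) (h.hasGaussianLaw _)
    (fun v => h.integral_fieldPairing _) (fun v => h.integral_fieldPairing _)
    (fun v => h.integral_fieldPairing _) fun u v => by
      simpa only [multiscaleField, h.covariance_fieldPairing] using hcov u u.2 v v.2
  rw [Fintype.card_coe] at hperturb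
  linarith

lemma IsGFF.integrable_logSumExp_multiscaleField (h : IsGFF N P) (I : Finset ι) (c : ι → ℝ)
    (m : ι → ℤ) {κ : Type*} [Fintype κ] [Nonempty κ] (p : κ → Vtx) :
    Integrable (fun ω => logSumExp fun k => multiscaleField N I c m (p k) ω) P :=
  have := h.1
  integrable_logSumExp (h.hasGaussianLaw_multiscaleField I c m p).integrable

lemma IsGFF.integral_abs_logSumExp_multiscaleField_sub_le (h : IsGFF N P) {s : ℝ} (hs : 0 ≤ s)
    (hvar : ∀ v ∈ VN N, Var[multiscaleField N I c m v; P] ≤ s ^ 2) {κ : Type*} [Fintype κ]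
    [Nonempty κ] {p : κ → Vtx} (hp : ∀ k, p k ∈ VN N) :
    ∫ ω, |logSumExp (fun k => multiscaleField N I c m (p k) ω)
        - P[fun ω => logSumExp fun k => multiscaleField N I c m (p k) ω]| ∂P ≤ π / 2 * s :=
  integral_abs_logSumExp_sub_integral_le (X := fun k => multiscaleField N I c m (p k))
    (h.hasGaussianLaw_multiscaleField I c m p) (fun _ => h.integral_fieldPairing _) hs
    fun k => hvar (p k) (hp k)

lemma exp_logSumExp_sub_logSumExp {α : Type*} {S A : Finset α} [Nonempty S] [Nonempty A]
    (x : α → ℝ) : exp (logSumExp (fun v : S => x v) - logSumExp fun v : A => x v)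
      = (∑ v ∈ S, exp (x v)) / ∑ v ∈ A, exp (x v) := by
  rw [exp_sub, exp_logSumExp, exp_logSumExp, Finset.sum_coe_sort S fun v => exp (x v),
    Finset.sum_coe_sort A fun v => exp (x v)]

theorem IsGFF.integral_min_one_sum_div_sum_le (h : IsGFF N P) {κ : Type*} {S A : Finset Vtx}
    [Nonempty S] {J : Finset κ} {k : κ → Vtx} {n : ℕ} {s t a : ℝ} (hSV : S ⊆ VN N)
    (hAV : A ⊆ VN N) (hJ : J.Nonempty) (hmaps : ∀ j ∈ J, ∀ v ∈ S, v + k j ∈ A)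
    (hmult : ∀ x ∈ A, (J.filter fun j => x - k j ∈ S).card ≤ n)
    (hadm : ∀ j ∈ J, ∀ v ∈ S, IsAdmissibleShift (intr (VN N)) I m (k j) v) (hs : 0 ≤ s)
    (hvar : ∀ v ∈ VN N, Var[multiscaleField N I c m v; P] ≤ s ^ 2) (ht : 0 < t) (ha : 0 < a)
    (hgain : a + (log S.card + shiftErrorVariance I c * t ^ 2 / 2) / t ≤ log (J.card / n)) :
    ∫ ω, min 1 ((∑ v ∈ S, exp (multiscaleField N I c m v ω))
      / ∑ v ∈ A, exp (multiscaleField N I c m v ω)) ∂P ≤ exp (-a / 2) + 2 * π * s / a := by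
  have := h.1
  have hA : Nonempty A := by
    obtain ⟨j, hj⟩ := hJ
    obtain ⟨v, hv⟩ := ‹Nonempty S›
    exact ⟨⟨_, hmaps j hj v hv⟩⟩
  simp_rw [← exp_logSumExp_sub_logSumExp]
  calc _ ≤ exp (-a / 2) + 4 * (π / 2 * s) / a :=
        integral_min_one_exp_sub_le
          (Z := fun j ω => logSumExp fun v : S => multiscaleField N I c m (v + k j) ω) hJ
          (h.integrable_logSumExp_multiscaleField I c m _)
          (fun j _ => h.integrable_logSumExp_multiscaleField I c m _)
          (h.integral_abs_logSumExp_multiscaleField_sub_le hs hvar fun v => hSV v.2)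
          (fun j hj => h.integral_abs_logSumExp_multiscaleField_sub_le hs hvar fun v =>
            hAV (hmaps j hj v v.2))
          (fun j hj => h.integral_logSumExp_multiscaleField_le (hadm j hj) c ht) ha
          fun ω => (add_le_add_right hgain _).trans
            (average_logSumExp_add_le hJ hmaps hmult (multiscaleField N I c m · ω))
    _ = exp (-a / 2) + 2 * π * s / a := by ring

/-- The strip has about `K / w` disjoint translates in `A_{N,ρ}`, each of which carries at least
its mass up to lower order. -/
theorem IsGFF.integral_min_one_cornerStrip_div_AN_le (h : IsGFF N P) {ρ : ℝ} {w K : ℤ}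
    (hw : 0 ≤ w) (hwK : w ≤ K) (hK : 0 < K) (hKN : 8 * K ≤ N) (hρ : (N : ℝ) ^ (1 - ρ) ≤ K)
    (hm : ∀ i ∈ I, 0 ≤ m i ∧ m i ≤ K) {s t a : ℝ} (hs : 0 ≤ s)
    (hvar : ∀ v ∈ VN N, Var[multiscaleField N I c m v; P] ≤ s ^ 2) (ht : 0 < t) (ha : 0 < a)
    (hgain : a + (log ((N + 1) ^ 2) + shiftErrorVariance I c * t ^ 2 / 2) / t
      ≤ log (K.toNat / (2 * (w + 1)).toNat)) (b : Bool × Bool) :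
    ∫ ω, min 1 ((∑ v ∈ cornerStrip N w b, exp (multiscaleField N I c m v ω))
      / ∑ v ∈ AN N ρ, exp (multiscaleField N I c m v ω)) ∂P ≤ exp (-a / 2) + 2 * π * s / a := by
  have hS := cornerStrip_nonempty N hw b
  have := hS.to_subtype
  have hJcard : (Finset.Ioc K (2 * K)).card = K.toNat := by rw [Int.card_Ioc]; congr 1; ring
  have hcard : log (cornerStrip N w b).card ≤ log ((N + 1) ^ 2) := by
    have := hS.card_pos
    exact log_le_log (by positivity) (by exact_mod_cast card_cornerStrip_le N w b)
  refine h.integral_min_one_sum_div_sum_le (J := Finset.Ioc K (2 * K)) (k := inwardShift b)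
    (cornerStrip_subset_VN N w b) (Finset.filter_subset _ _) (Finset.nonempty_Ioc.2 (by lia))
    (fun k hk v hv => ?_) (fun x _ => card_filter_sub_inwardShift_le hw _ b x)
    (fun k hk v hv => ?_) hs hvar ht ha ?_
  · rw [Finset.mem_Ioc] at hk
    exact add_inwardShift_mem_AN hρ hK.le hKN hk.1 hk.2 hv
  · rw [Finset.mem_Ioc] at hk
    exact isAdmissibleShift_of_mem_cornerStrip hw hwK hKN hm hk.1 hk.2 hv
  · rw [hJcard]
    exact hgain.trans' (by gcongr)

end StripRatio

noncomputable section MesoscopicScales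

open MeasureTheory ProbabilityTheory Real

variable {N : ℕ} {δ : ℝ}

lemma sixteen_le_of_sixteen_le_rpow (hδ : 0 < δ) (hδ1 : δ ≤ 1) (hN : 16 ≤ (N : ℝ) ^ δ) :
    16 ≤ N := by
  have hpos : N ≠ 0 := by
    rintro rfl
    rw [Nat.cast_zero, zero_rpow hδ.ne'] at hN
    linarith
  have hone : (1 : ℝ) ≤ N := by exact_mod_cast Nat.one_le_iff_ne_zero.2 hpos
  exact_mod_cast hN.trans (rpow_le_self_of_one_le hone hδ1)

lemma rpow_one_sub_le_div_sixteen (hδ : 0 < δ) (hN : 16 ≤ (N : ℝ) ^ δ) :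
    (N : ℝ) ^ (1 - δ) ≤ N / 16 := by
  rcases N.eq_zero_or_pos with rfl | hpos
  · rw [Nat.cast_zero, zero_rpow hδ.ne'] at hN
    linarith
  · rw [rpow_sub (Nat.cast_pos.2 hpos), rpow_one]
    gcongr

lemma div_sixteen_le_ediv_eight (hN : 16 ≤ N) : (N : ℝ) / 16 ≤ ((N / 8 : ℤ) : ℝ) := by
  have : (N : ℝ) ≤ 16 * ((N / 8 : ℤ) : ℝ) := by exact_mod_cast (by lia : (N : ℤ) ≤ 16 * (N / 8))
  linarith

/-- A strip of width `N ^ (1 - δ)` has of order `N ^ δ` disjoint translates inside the box. -/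
lemma mul_log_sub_le_log_div_toNat (hδ : 0 < δ) (hδ1 : δ ≤ 1) (hN : 16 ≤ (N : ℝ) ^ δ) :
    δ * log N - log 64
      ≤ log ((N / 8 : ℤ).toNat / (2 * (⌊(N : ℝ) ^ (1 - δ)⌋ + 1)).toNat) := by
  have hN16 := sixteen_le_of_sixteen_le_rpow hδ hδ1 hN
  have hN1 : (1 : ℝ) ≤ N := by exact_mod_cast (by lia : 1 ≤ N)
  have hN0 : (0 : ℝ) < N := by linarith
  have hw : 0 ≤ ⌊(N : ℝ) ^ (1 - δ)⌋ := Int.floor_nonneg.2 (by positivity)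
  have hK : (N : ℝ) / 16 ≤ ((N / 8 : ℤ).toNat : ℝ) :=
    (div_sixteen_le_ediv_eight hN16).trans (by exact_mod_cast Int.cast_le.2 (Int.self_le_toNat _))
  have hmult : ((2 * (⌊(N : ℝ) ^ (1 - δ)⌋ + 1)).toNat : ℝ) ≤ 4 * (N : ℝ) ^ (1 - δ) := by
    have hcast : ((2 * (⌊(N : ℝ) ^ (1 - δ)⌋ + 1)).toNat : ℝ) = 2 * (⌊(N : ℝ) ^ (1 - δ)⌋ + 1) := by
      exact_mod_cast congrArg (Int.cast : ℤ → ℝ) (Int.toNat_of_nonneg (by lia))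
    linarith [Int.floor_le ((N : ℝ) ^ (1 - δ)), one_le_rpow hN1 (sub_nonneg.2 hδ1)]
  have hmult0 : (0 : ℝ) < (2 * (⌊(N : ℝ) ^ (1 - δ)⌋ + 1)).toNat := by
    exact_mod_cast Int.pos_iff_toNat_pos.1 (by lia)
  calc δ * log N - log 64 = log (N / 16 / (4 * (N : ℝ) ^ (1 - δ))) := by
        rw [div_div, log_div (by positivity) (by positivity), ← mul_assoc,
          log_mul (by norm_num) (by positivity), log_rpow hN0]
        norm_num
        ring
    _ ≤ _ := by gcongr

lemma eventually_sixteen_le_rpow (hδ : 0 < δ) : ∀ᶠ N : ℕ in atTop, 16 ≤ (N : ℝ) ^ δ :=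
  ((tendsto_rpow_atTop hδ).comp tendsto_natCast_atTop_atTop).eventually_ge_atTop 16

/-- At the inverse temperature `8 / δ`, the entropy `2 log (N + 1)` of a strip costs about
`δ / 4 * log N`, so together with `δ / 2 * log N` it stays below the logarithm `δ * log N` of the
number of translates. -/
lemma eventually_half_mul_log_add_le_log_div_toNat (hδ : 0 < δ) (hδ1 : δ ≤ 1) (C : ℝ) :
    ∀ᶠ N : ℕ in atTop, δ / 2 * log N + (log ((N + 1) ^ 2) + C) / (8 / δ)
      ≤ log ((N / 8 : ℤ).toNat / (2 * (⌊(N : ℝ) ^ (1 - δ)⌋ + 1)).toNat) := by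
  have hlog : Tendsto (fun N : ℕ => δ / 4 * log N) atTop atTop :=
    (tendsto_log_atTop.comp tendsto_natCast_atTop_atTop).const_mul_atTop (by positivity)
  filter_upwards [eventually_sixteen_le_rpow hδ,
    hlog.eventually_ge_atTop (log 64 + δ / 8 * (log 4 + C))] with N hN hN'
  have hN1 : (1 : ℝ) ≤ N := by
    exact_mod_cast (by norm_num : 1 ≤ 16).trans (sixteen_le_of_sixteen_le_rpow hδ hδ1 hN)
  have hcard : log ((N + 1) ^ 2) ≤ log 4 + 2 * log N := by
    calc log ((N + 1) ^ 2) ≤ log (4 * (N : ℝ) ^ 2) := log_le_log (by positivity) (by nlinarith)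
      _ = log 4 + 2 * log N := by
        rw [log_mul (by norm_num) (by positivity), log_pow, Nat.cast_ofNat]
  calc δ / 2 * log N + (log ((N + 1) ^ 2) + C) / (8 / δ)
      = δ / 2 * log N + δ / 8 * (log ((N + 1) ^ 2) + C) := by field_simp
    _ ≤ δ / 2 * log N + δ / 8 * (log 4 + 2 * log N + C) := by gcongr
    _ ≤ δ * log N - log 64 := by linarith
    _ ≤ _ := mul_log_sub_le_log_div_toNat hδ hδ1 hN

end MesoscopicScales

noncomputable section BoundaryRemoval

open MeasureTheory ProbabilityTheory Real

variable {P : ℕ → Measure FieldSp} {ι : Type*} {I : Finset ι} {c l : ι → ℝ} {δ ρ : ℝ}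

lemma scaleRadius_mem_Icc {N : ℕ} {lam : ℝ} (hδ : 0 < δ) (hδ1 : δ ≤ 1) (hN : 16 ≤ (N : ℝ) ^ δ)
    (hlam : δ ≤ lam) : 0 ≤ scaleRadius N lam ∧ scaleRadius N lam ≤ N / 8 := by
  have hN16 := sixteen_le_of_sixteen_le_rpow hδ hδ1 hN
  have hN1 : (1 : ℝ) ≤ N := by exact_mod_cast (by lia : 1 ≤ N)
  have hmono : (N : ℝ) ^ (1 - lam) ≤ (N : ℝ) ^ (1 - δ) :=
    rpow_le_rpow_of_exponent_le hN1 (by linarith)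
  refine ⟨Int.floor_nonneg.2 (by positivity), Int.floor_le_iff.2 ?_⟩
  linarith [rpow_one_sub_le_div_sixteen hδ hN, div_sixteen_le_ediv_eight hN16,
    rpow_nonneg (by linarith : (0 : ℝ) ≤ N) (1 - lam)]

theorem eventually_integral_min_one_cornerStrip_div_AN_le (hP : ∀ N, IsGFF N (P N))
    (hδ : 0 < δ) (hδ1 : δ ≤ 1) (hl : ∀ i ∈ I, δ ≤ l i) (hρ : δ ≤ ρ) :
    ∀ᶠ N : ℕ in atTop, ∀ s, 0 ≤ s → (∀ v ∈ VN N,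
      Var[multiscaleField N I c (fun i => scaleRadius N (l i)) v; P N] ≤ s ^ 2) → ∀ b,
      ∫ ω, min 1 ((∑ v ∈ cornerStrip N ⌊(N : ℝ) ^ (1 - δ)⌋ b,
          exp (multiscaleField N I c (fun i => scaleRadius N (l i)) v ω))
        / ∑ v ∈ AN N ρ, exp (multiscaleField N I c (fun i => scaleRadius N (l i)) v ω)) ∂P N
      ≤ exp (-(δ / 2 * log N) / 2) + 2 * π * s / (δ / 2 * log N) := by
  filter_upwards [eventually_sixteen_le_rpow hδ, eventually_half_mul_log_add_le_log_div_toNat hδ hδ1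
    (shiftErrorVariance I c * (8 / δ) ^ 2 / 2)] with N hN hgain s hs hvar b
  have hN16 := sixteen_le_of_sixteen_le_rpow hδ hδ1 hN
  have hN1 : (1 : ℝ) < N := by exact_mod_cast (by lia : 1 < N)
  have hlog : 0 < log N := log_pos hN1
  have hK : (N : ℝ) ^ (1 - δ) ≤ ((N / 8 : ℤ) : ℝ) :=
    (rpow_one_sub_le_div_sixteen hδ hN).trans (div_sixteen_le_ediv_eight hN16)
  exact (hP N).integral_min_one_cornerStrip_div_AN_le (Int.floor_nonneg.2 (by positivity))
    (Int.floor_le_iff.2 (hK.trans_lt (lt_add_one _))) (by lia) (by lia)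
    ((rpow_le_rpow_of_exponent_le hN1.le (by linarith)).trans hK)
    (fun i hi => scaleRadius_mem_Icc hδ hδ1 hN (hl i hi)) hs hvar (by positivity) (by positivity)
    hgain b

theorem eventually_abs_integral_replicaAvg_AN_sub_le (hP : ∀ N, IsGFF N (P N))
    (hδ : 0 < δ) (hδ1 : δ ≤ 1) (hl : ∀ i ∈ I, δ ≤ l i) (hρ : δ ≤ ρ) (n : ℕ) :
    ∀ᶠ N : ℕ in atTop, ∀ s, 0 ≤ s → (∀ v ∈ VN N,
      Var[multiscaleField N I c (fun i => scaleRadius N (l i)) v; P N] ≤ s ^ 2) →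
      ∀ F : (Fin n → Vtx) → ℝ, (∀ vv, |F vv| ≤ 1) →
      |∫ ω, replicaAvg (VN N)
            (multiscaleField N I c (fun i => scaleRadius N (l i)) · ω) n F ∂P N
          - ∫ ω, replicaAvg (AN N ρ)
            (multiscaleField N I c (fun i => scaleRadius N (l i)) · ω) n F ∂P N|
        ≤ 2 * n * (4 * (exp (-(δ / 2 * log N) / 2) + 2 * π * s / (δ / 2 * log N))) := by
  filter_upwards [eventually_sixteen_le_rpow hδ,
    eventually_integral_min_one_cornerStrip_div_AN_le (c := c) hP hδ hδ1 hl hρ]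
    with N hN hratio s hs hvar F hF
  have := (hP N).1
  have hN16 := sixteen_le_of_sixteen_le_rpow hδ hδ1 hN
  have hN1 : (1 : ℝ) ≤ N := by exact_mod_cast (by lia : 1 ≤ N)
  have hmono : (N : ℝ) ^ (1 - ρ) ≤ (N : ℝ) ^ (1 - δ) :=
    rpow_le_rpow_of_exponent_le hN1 (by linarith)
  have hstrips : VN N \ AN N ρ
      ⊆ Finset.univ.biUnion (cornerStrip N ⌊(N : ℝ) ^ (1 - δ)⌋) :=
    VN_sdiff_AN_subset (hmono.trans_lt (Int.lt_floor_add_one _))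
  have hA : (AN N ρ).Nonempty := by
    obtain ⟨v, hv⟩ := cornerStrip_nonempty N le_rfl (false, false)
    have hK : (N : ℝ) ^ (1 - ρ) ≤ ((N / 8 : ℤ) : ℝ) := hmono.trans
      ((rpow_one_sub_le_div_sixteen hδ hN).trans (div_sixteen_le_ediv_eight hN16))
    exact ⟨_, add_inwardShift_mem_AN (k := 2 * (N / 8)) hK (by lia) (by lia) (by lia) le_rfl hv⟩
  calc _ ≤ 2 * n * ((Finset.univ : Finset (Bool × Bool)).card
          * (exp (-(δ / 2 * log N) / 2) + 2 * π * s / (δ / 2 * log N))) :=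
        abs_integral_replicaAvg_sub_le (X := multiscaleField N I c fun i => scaleRadius N (l i))
          hA (Finset.filter_subset _ _) hstrips (fun v => measurable_fieldPairing _ _) hF
          fun b _ => hratio s hs hvar b
    _ = _ := by simp

end BoundaryRemoval

noncomputable section Overlaps

open MeasureTheory ProbabilityTheory Real

section FixedSize

variable {N M : ℕ} {sigv lamv : ℕ → ℝ} {P : Measure FieldSp}

theorem IsGFF.const_mul_psiFld_ae_eq (h : IsGFF N P) (hp : ScaleParams M sigv lamv) (β : ℝ)
    {v : Vtx} (hv : v ∈ VN N) :
    (fun ω => β * psiFld N M sigv lamv P v ω) =ᵐ[P] multiscaleField N (Finset.Icc 1 M)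
      (fun i => β * scaleWeight M sigv i) (fun i => scaleRadius N (lamv i)) v := by
  filter_upwards [h.psiFld_ae_eq hp hv] with ω hω
  simp only [hω, multiscaleField_apply, Finset.mul_sum, mul_assoc]

theorem IsGFF.variance_multiscaleField (h : IsGFF N P) (hp : ScaleParams M sigv lamv) (β : ℝ)
    {v : Vtx} (hv : v ∈ VN N) :
    Var[multiscaleField N (Finset.Icc 1 M) (fun i => β * scaleWeight M sigv i)
      (fun i => scaleRadius N (lamv i)) v; P] = β ^ 2 * psiCov N M sigv lamv P v v := by
  refine (variance_of_integral_eq_zero (measurable_fieldPairing _ _).aemeasurable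
    (h.integral_fieldPairing _)).trans ?_
  rw [psiCov, ← integral_const_mul]
  refine integral_congr_ae ?_
  filter_upwards [h.const_mul_psiFld_ae_eq hp β hv] with ω hω
  exact (congrArg (· ^ 2) hω.symm).trans (by ring)

theorem IsGFF.integral_replicaAvg_const_mul_psiFld (h : IsGFF N P) (hp : ScaleParams M sigv lamv)
    (β : ℝ) {V : Finset Vtx} (hV : V ⊆ VN N) (n : ℕ) (F : (Fin n → Vtx) → ℝ) :
    ∫ ω, replicaAvg V (fun v => β * psiFld N M sigv lamv P v ω) n F ∂P
      = ∫ ω, replicaAvg V (multiscaleField N (Finset.Icc 1 M) (fun i => β * scaleWeight M sigv i)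
          (fun i => scaleRadius N (lamv i)) · ω) n F ∂P := by
  refine integral_congr_ae ?_
  filter_upwards [(eventually_all_finset V).2 fun v hv => h.const_mul_psiFld_ae_eq hp β (hV hv)]
    with ω hω using replicaAvg_congr hω F

end FixedSize

lemma tendsto_exp_add_sqrt_div_log (n : ℕ) {δ J C : ℝ} (hδ : 0 < δ) (b : ℝ) :
    Tendsto (fun N : ℕ => 2 * n * (4 * (exp (-(δ / 2 * log N) / 2)
      + 2 * π * (b * √(J * log N + C)) / (δ / 2 * log N)))) atTop (nhds 0) := by
  have hlog : Tendsto (fun N : ℕ => log (N : ℝ)) atTop atTop :=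
    tendsto_log_atTop.comp tendsto_natCast_atTop_atTop
  have hexp : Tendsto (fun x : ℝ => exp (-(δ / 2 * x) / 2)) atTop (nhds 0) := by
    refine tendsto_exp_atBot.comp ?_
    simpa only [id, neg_div, tendsto_neg_atBot_iff] using
      (tendsto_id.const_mul_atTop (half_pos hδ)).atTop_div_const two_pos
  have hinv := tendsto_inv_atTop_zero (𝕜 := ℝ)
  have hsqrt : Tendsto (fun x : ℝ => √(J * x + C) / x) atTop (nhds 0) := by
    have hlim : Tendsto (fun x : ℝ => √(J * x⁻¹ + C * (x⁻¹ * x⁻¹))) atTop (nhds 0) := by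
      simpa using ((hinv.const_mul J).add ((hinv.mul hinv).const_mul C)).sqrt
    refine hlim.congr' ?_
    filter_upwards [eventually_gt_atTop 0] with x hx
    rw [show J * x⁻¹ + C * (x⁻¹ * x⁻¹) = (J * x + C) / x ^ 2 by field_simp,
      sqrt_div' _ (sq_nonneg x), sqrt_sq hx.le]
  have hsum := ((hexp.add (hsqrt.const_mul (2 * π * b / (δ / 2)))).const_mul
    (2 * n * 4 : ℝ)).comp hlog
  rw [mul_zero, add_zero, mul_zero] at hsum
  refine hsum.congr fun N => ?_
  simp only [Function.comp_apply]
  ring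

theorem two_overlap_distribution_near_boundary_general
    (M : ℕ) (sigv lamv : ℕ → ℝ) (hparams : ScaleParams M sigv lamv)
    (P : ℕ → Measure FieldSp) (hGFF : ∀ N, IsGFF N (P N))
    (C₀ : ℝ) (hC₀ : IsVarBound M sigv lamv P C₀) (β ρ : ℝ) (hρ : 0 < ρ)
    (n : ℕ) (F : ℕ → (Fin n → Vtx) → ℝ) (hF : ∀ N vv, |F N vv| ≤ 1) :
    Tendsto (fun N => |gibbsExp N M sigv lamv (P N) β n (F N)
      - gibbsExpRes N M sigv lamv (P N) β ρ n fun vv _ => F N vv|) atTop (nhds 0) := by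
  obtain ⟨hC, N₀, hvar⟩ := hC₀
  have hδ : 0 < min ρ (lamv 1) := lt_min hρ hparams.lam_one_pos
  have hδ1 : min ρ (lamv 1) ≤ 1 := (min_le_right _ _).trans
    ((hparams.lam_one_le (Finset.mem_Icc.2 ⟨hparams.1, le_rfl⟩)).trans_eq hparams.2.2.2.1)
  have hJ : 0 ≤ Jsig2 M sigv lamv 1 :=
    intervalIntegral.integral_nonneg zero_le_one fun u _ => sq_nonneg _
  refine squeeze_zero' (Eventually.of_forall fun N => abs_nonneg _) ?_
    (tendsto_exp_add_sqrt_div_log n (J := Jsig2 M sigv lamv 1) (C := C₀) hδ |β|)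
  filter_upwards [eventually_ge_atTop N₀, eventually_abs_integral_replicaAvg_AN_sub_le
    (c := fun i => β * scaleWeight M sigv i) hGFF hδ hδ1
    (fun i hi => (min_le_right _ _).trans (hparams.lam_one_le hi)) (min_le_left _ _) n]
    with N hN hmain
  have hgibbs := (hGFF N).integral_replicaAvg_const_mul_psiFld hparams β Finset.Subset.rfl n (F N)
  have hgibbsRes := (hGFF N).integral_replicaAvg_const_mul_psiFld hparams β
    (Finset.filter_subset _ _ : AN N ρ ⊆ VN N) n (F N)
  refine (congrArg abs (congrArg₂ (· - ·) hgibbs hgibbsRes)).trans_le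
    (hmain _ (by positivity) (fun v hv => ?_) (F N) (hF N))
  have hW : 0 ≤ Jsig2 M sigv lamv 1 * log N + C₀ := by positivity
  rw [(hGFF N).variance_multiscaleField hparams β hv, mul_pow, sq_abs, sq_sqrt hW]
  gcongr
  exact hvar N hN v hv

end Overlaps

/-- **Corollary (Full and restricted two-overlap distributions agree in the limit).**
Let `β > 0` and `ρ ∈ (0,λ_1)`. Then for every `r ∈ ℝ` (possibly depending on `ρ`),
`lim_{N→∞} |E𝒢_{β,N}^{×2}[1_{{q^N(v,v') ≤ r}}] − E𝒢_{β,N,ρ}^{×2}[1_{{q^N(v,v') ≤ r}}]| = 0`. -/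
theorem two_overlap_distribution_near_boundary
    (M : ℕ) (sigv lamv : ℕ → ℝ) (hparams : ScaleParams M sigv lamv)
    (P : ℕ → MeasureTheory.Measure FieldSp) (hGFF : ∀ N, IsGFF N (P N))
    (C₀ : ℝ) (hC₀ : IsVarBound M sigv lamv P C₀)
    (β ρ : ℝ) (hβ : 0 < β) (hρ0 : 0 < ρ) (hρ1 : ρ < lamv 1) (r : ℝ) :
    Filter.Tendsto (fun N =>
        |gibbsExp N M sigv lamv (P N) β 2
            (fun vv => if overlapQ N M sigv lamv (P N) C₀ (vv 0) (vv 1) ≤ r then (1 : ℝ) else 0) -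
          gibbsExpRes N M sigv lamv (P N) β ρ 2
            (fun vv _ => if overlapQ N M sigv lamv (P N) C₀ (vv 0) (vv 1) ≤ r then (1 : ℝ) else 0)|)
      Filter.atTop (nhds 0) := by
  apply two_overlap_distribution_near_boundary_general M sigv lamv hparams P hGFF C₀ hC₀ β ρ hρ0
  intro N vv
  split_ifs <;> norm_num
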